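/- arXiv:2103.02540 — 11 statements merged into one kernel-verified Lean document; each statement's English description precedes it below -/
import Mathlib

section
/- Let L be a subgroup with ℤ⁴ ⊕ ℤ⁸ ⊆ L ⊆ (1/2)ℤ⁴ ⊕ (1/2)ℤ⁸ such that L is an even lattice for the form of K ⊕ E, the index [L : ℤ⁴ ⊕ ℤ⁸] equals 2, and L ∩ (ℚ⁴ ⊕ 0) = ℤ⁴ ⊕ 0, L ∩ (0 ⊕ ℚ⁸) = 0 ⊕ ℤ⁸. Then for every d = (d₁,d₂) ∈ L ∖ (ℤ⁴ ⊕ ℤ⁸) one has d₁ ∉ ℤ⁴, d₂ ∉ ℤ⁸, and ⟨d₁,d₁⟩ ≡ ⟨d₂,d₂⟩ (mod 2); moreover the residue of ⟨d₁,d₁⟩ modulo 2 is the same for all such d. (This is the well-definedness of the parity of a fixed-point-free involution.) -/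
/-!
STATEMENT 4: Well-definedness of the parity of a fixed-point-free involution.
If `ℤ⁴ ⊕ ℤ⁸ ⊆ L ⊆ (1/2)ℤ⁴ ⊕ (1/2)ℤ⁸` is a subgroup which is even for the
form of `K ⊕ E`, of index 2 over `ℤ⁴ ⊕ ℤ⁸`, and meeting `ℚ⁴ ⊕ 0` and
`0 ⊕ ℚ⁸` exactly in `ℤ⁴ ⊕ 0` and `0 ⊕ ℤ⁸`, then every
`d = (d₁,d₂) ∈ L ∖ (ℤ⁴ ⊕ ℤ⁸)` has `d₁ ∉ ℤ⁴`, `d₂ ∉ ℤ⁸` and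
`⟨d₁,d₁⟩ ≡ ⟨d₂,d₂⟩ (mod 2)`, and the residue of `⟨d₁,d₁⟩ mod 2` is the same
for all such `d`.
-/

noncomputable section
namespace Stmt4

/-- The bilinear form of K = U(2) ⊕ U(2) on ℚ⁴ (ℚ-bilinear extension):
Gram matrix has blocks [[0,2],[2,0]] and [[0,2],[2,0]]. -/
def bK (x y : Fin 4 → ℚ) : ℚ :=
  2 * (x 0 * y 1 + x 1 * y 0) + 2 * (x 2 * y 3 + x 3 * y 2)

/-- The bilinear form of E = E8(2) on ℚ⁸ (ℚ-bilinear extension):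
Gram matrix is −2 times the E8 Cartan matrix. -/
def bE (x y : Fin 8 → ℚ) : ℚ :=
  ∑ i : Fin 8, ∑ j : Fin 8, x i * ((-2 * CartanMatrix.E₈ i j : ℤ) : ℚ) * y j

/-- `x` lies in the lattice ℤ⁴ ⊂ ℚ⁴. -/
def isInt4 (x : Fin 4 → ℚ) : Prop := ∀ i, ∃ n : ℤ, x i = n

/-- `x` lies in the lattice ℤ⁸ ⊂ ℚ⁸. -/
def isInt8 (x : Fin 8 → ℚ) : Prop := ∀ i, ∃ n : ℤ, x i = n

/-- `x` lies in the dual lattice (1/2)ℤ⁴ ⊂ ℚ⁴ of K. -/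
def isHalf4 (x : Fin 4 → ℚ) : Prop := ∀ i, ∃ n : ℤ, x i = n / 2

/-- `x` lies in the dual lattice (1/2)ℤ⁸ ⊂ ℚ⁸ of E. -/
def isHalf8 (x : Fin 8 → ℚ) : Prop := ∀ i, ∃ n : ℤ, x i = n / 2

/-- The ambient space ℚ⁴ ⊕ ℚ⁸ of K ⊕ E. -/
abbrev V : Type := (Fin 4 → ℚ) × (Fin 8 → ℚ)

/-- The orthogonal direct sum form of K ⊕ E on ℚ⁴ ⊕ ℚ⁸. -/
def bV (x y : V) : ℚ := bK x.1 y.1 + bE x.2 y.2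

/-- Membership in the lattice Λ' = ℤ·(d₁,d₂) + (ℤ⁴ ⊕ ℤ⁸) ⊂ ℚ⁴ ⊕ ℚ⁸. -/
def memL (d₁ : Fin 4 → ℚ) (d₂ : Fin 8 → ℚ) (x : V) : Prop :=
  ∃ n : ℤ, isInt4 (x.1 - (n : ℚ) • d₁) ∧ isInt8 (x.2 - (n : ℚ) • d₂)

/-- Norms on the dual of E8(2) are integers. -/
lemma bE_half (x : Fin 8 → ℚ) (h : isHalf8 x) : ∃ k : ℤ, bE x x = k := by
  choose m hm using h
  have e : bE x x = -4 * (x 0 ^ 2 + x 1 ^ 2 + x 2 ^ 2 + x 3 ^ 2 + x 4 ^ 2 + x 5 ^ 2 + x 6 ^ 2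
      + x 7 ^ 2 - x 0 * x 2 - x 1 * x 3 - x 2 * x 3 - x 3 * x 4 - x 4 * x 5 - x 5 * x 6
      - x 6 * x 7) := by
    simp [bE, Fin.sum_univ_succ, CartanMatrix.E₈, Matrix.of_apply, Fin.succ, Matrix.cons_val]
    ring
  refine ⟨-(m 0 ^ 2 + m 1 ^ 2 + m 2 ^ 2 + m 3 ^ 2 + m 4 ^ 2 + m 5 ^ 2 + m 6 ^ 2
      + m 7 ^ 2 - m 0 * m 2 - m 1 * m 3 - m 2 * m 3 - m 3 * m 4 - m 4 * m 5 - m 5 * m 6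
      - m 6 * m 7), ?_⟩
  rw [e]
  simp only [hm]
  push_cast
  ring

theorem statement4 (L : AddSubgroup V)
    (hsub : ∀ x : V, isInt4 x.1 ∧ isInt8 x.2 → x ∈ L)
    (hhalf : ∀ x ∈ L, isHalf4 x.1 ∧ isHalf8 x.2)
    (heven : ∀ x ∈ L, ∃ k : ℤ, bV x x = 2 * k)
    (hindex₁ : ∃ x ∈ L, ¬(isInt4 x.1 ∧ isInt8 x.2))
    (hindex₂ : ∀ x ∈ L, ∀ y ∈ L, ¬(isInt4 x.1 ∧ isInt8 x.2) →
      ¬(isInt4 y.1 ∧ isInt8 y.2) → isInt4 (x - y).1 ∧ isInt8 (x - y).2)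
    (hK : ∀ x ∈ L, x.2 = 0 → isInt4 x.1)
    (hE : ∀ x ∈ L, x.1 = 0 → isInt8 x.2) :
    (∀ d ∈ L, ¬(isInt4 d.1 ∧ isInt8 d.2) →
      ¬ isInt4 d.1 ∧ ¬ isInt8 d.2 ∧ ∃ k : ℤ, bK d.1 d.1 - bE d.2 d.2 = 2 * k) ∧
    (∀ d ∈ L, ∀ d' ∈ L, ¬(isInt4 d.1 ∧ isInt8 d.2) → ¬(isInt4 d'.1 ∧ isInt8 d'.2) →
      ∃ k : ℤ, bK d.1 d.1 - bK d'.1 d'.1 = 2 * k) := by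
  refine ⟨fun d hd hn => ?_, fun d hd d' hd' hn hn' => ?_⟩
  · have z4 : isInt4 0 := fun i => ⟨0, by simp⟩
    have z8 : isInt8 0 := fun i => ⟨0, by simp⟩
    refine ⟨fun h => hn ⟨h, ?_⟩, fun h => hn ⟨?_, h⟩, ?_⟩
    · have := hE (d - (d.1, 0)) (L.sub_mem hd (hsub _ ⟨h, z8⟩)) (by simp)
      simpa using this
    · have := hK (d - (0, d.2)) (L.sub_mem hd (hsub _ ⟨z4, h⟩)) (by simp)
      simpa using this
    · obtain ⟨k, hk⟩ := heven d hd
      obtain ⟨l, hl⟩ := bE_half d.2 (hhalf d hd).2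
      refine ⟨k - l, ?_⟩
      unfold bV at hk
      push_cast
      linarith
  · obtain ⟨h, -⟩ := hindex₂ d hd d' hd' hn hn'
    choose n hnn using h
    obtain ⟨h', -⟩ := hhalf d hd
    choose a ha using h'
    have hd1 : ∀ i, d'.1 i = a i / 2 - n i := fun i => by
      have := hnn i
      simp only [Prod.fst_sub, Pi.sub_apply] at this
      rw [← ha i, ← this]
      ring
    refine ⟨a 0 * n 1 + a 1 * n 0 - 2 * n 0 * n 1 + a 2 * n 3 + a 3 * n 2 - 2 * n 2 * n 3, ?_⟩
    simp only [bK, hd1, ha]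
    push_cast
    ring

end Stmt4
end
end

section
/- With Λ' as above, let δ ∈ Λ' be any root, i.e. ⟨δ,δ⟩ = −2. Then δ_K − d₁ ∈ ℤ⁴ and δ_E − d₂ ∈ ℤ⁸; in particular Λ' = ℤδ + (ℤ⁴ ⊕ ℤ⁸). -/
/-!
STATEMENT 5: With `Λ' = ℤ·(d₁,d₂) + (ℤ⁴ ⊕ ℤ⁸)` as in the context, for every
root `δ ∈ Λ'` (i.e. `⟨δ,δ⟩ = -2`) one has `δ_K − d₁ ∈ ℤ⁴` and
`δ_E − d₂ ∈ ℤ⁸`; in particular `Λ' = ℤδ + (ℤ⁴ ⊕ ℤ⁸)`.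
-/

noncomputable section
namespace Stmt5

/-- The bilinear form of K = U(2) ⊕ U(2) on ℚ⁴ (ℚ-bilinear extension):
Gram matrix has blocks [[0,2],[2,0]] and [[0,2],[2,0]]. -/
def bK (x y : Fin 4 → ℚ) : ℚ :=
  2 * (x 0 * y 1 + x 1 * y 0) + 2 * (x 2 * y 3 + x 3 * y 2)

/-- The bilinear form of E = E8(2) on ℚ⁸ (ℚ-bilinear extension):
Gram matrix is −2 times the E8 Cartan matrix. -/
def bE (x y : Fin 8 → ℚ) : ℚ :=
  ∑ i : Fin 8, ∑ j : Fin 8, x i * ((-2 * CartanMatrix.E₈ i j : ℤ) : ℚ) * y j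

/-- `x` lies in the lattice ℤ⁴ ⊂ ℚ⁴. -/
def isInt4 (x : Fin 4 → ℚ) : Prop := ∀ i, ∃ n : ℤ, x i = n

/-- `x` lies in the lattice ℤ⁸ ⊂ ℚ⁸. -/
def isInt8 (x : Fin 8 → ℚ) : Prop := ∀ i, ∃ n : ℤ, x i = n

/-- `x` lies in the dual lattice (1/2)ℤ⁴ ⊂ ℚ⁴ of K. -/
def isHalf4 (x : Fin 4 → ℚ) : Prop := ∀ i, ∃ n : ℤ, x i = n / 2

/-- `x` lies in the dual lattice (1/2)ℤ⁸ ⊂ ℚ⁸ of E. -/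
def isHalf8 (x : Fin 8 → ℚ) : Prop := ∀ i, ∃ n : ℤ, x i = n / 2

/-- The ambient space ℚ⁴ ⊕ ℚ⁸ of K ⊕ E. -/
abbrev V : Type := (Fin 4 → ℚ) × (Fin 8 → ℚ)

/-- The orthogonal direct sum form of K ⊕ E on ℚ⁴ ⊕ ℚ⁸. -/
def bV (x y : V) : ℚ := bK x.1 y.1 + bE x.2 y.2

/-- Membership in the lattice Λ' = ℤ·(d₁,d₂) + (ℤ⁴ ⊕ ℤ⁸) ⊂ ℚ⁴ ⊕ ℚ⁸. -/
def memL (d₁ : Fin 4 → ℚ) (d₂ : Fin 8 → ℚ) (x : V) : Prop :=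
  ∃ n : ℤ, isInt4 (x.1 - (n : ℚ) • d₁) ∧ isInt8 (x.2 - (n : ℚ) • d₂)

lemma bE_int (x : Fin 8 → ℚ) (h : isInt8 x) : ∃ k : ℤ, bE x x = 4 * k := by
  choose a ha using h
  refine ⟨-(a 0 ^ 2 + a 1 ^ 2 + a 2 ^ 2 + a 3 ^ 2 + a 4 ^ 2 + a 5 ^ 2 + a 6 ^ 2 + a 7 ^ 2)
    + (a 0 * a 2 + a 1 * a 3 + a 2 * a 3 + a 3 * a 4 + a 4 * a 5 + a 5 * a 6 + a 6 * a 7), ?_⟩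
  simp [bE, Fin.sum_univ_eight, CartanMatrix.E₈, ha]
  ring

lemma bK_int (x : Fin 4 → ℚ) (h : isInt4 x) : ∃ k : ℤ, bK x x = 4 * k := by
  choose a ha using h
  refine ⟨a 0 * a 1 + a 2 * a 3, ?_⟩
  simp only [bK, ha]
  push_cast
  ring

/-- `δ ≡ n d`, `n` odd, `d` half-integral gives `δ ≡ d`. -/
lemma odd_aux (δ d : ℚ) (m : ℤ) (hd : ∃ n : ℤ, d = n / 2)
    (h : ∃ n : ℤ, δ - ((2 * m + 1 : ℤ) : ℚ) * d = n) : ∃ n : ℤ, δ - d = n := by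
  obtain ⟨a, rfl⟩ := hd
  obtain ⟨b, hb⟩ := h
  refine ⟨b + m * a, ?_⟩
  push_cast at hb ⊢
  linarith

lemma even_aux (δ d : ℚ) (m : ℤ) (hd : ∃ n : ℤ, d = n / 2)
    (h : ∃ n : ℤ, δ - ((m + m : ℤ) : ℚ) * d = n) : ∃ n : ℤ, δ = n := by
  obtain ⟨a, rfl⟩ := hd
  obtain ⟨b, hb⟩ := h
  refine ⟨b + m * a, ?_⟩
  push_cast at hb ⊢
  linarith

lemma swap_aux (x δ d : ℚ) (m : ℤ) (hd : ∃ n : ℤ, δ - d = n) :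
    (∃ n : ℤ, x - (m : ℚ) * d = n) ↔ ∃ n : ℤ, x - (m : ℚ) * δ = n := by
  obtain ⟨a, ha⟩ := hd
  have : δ = d + a := by linarith
  subst this
  constructor
  · rintro ⟨b, hb⟩
    exact ⟨b - m * a, by push_cast; linarith⟩
  · rintro ⟨b, hb⟩
    exact ⟨b + m * a, by push_cast; linarith⟩

theorem statement5 (d₁ : Fin 4 → ℚ) (d₂ : Fin 8 → ℚ)
    (hd₁ : isHalf4 d₁) (hd₁' : ¬ isInt4 d₁)
    (hd₂ : isHalf8 d₂) (hd₂' : ¬ isInt8 d₂)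
    (heven : ∃ k : ℤ, bK d₁ d₁ + bE d₂ d₂ = 2 * k)
    (δ : V) (hδ : memL d₁ d₂ δ) (hroot : bV δ δ = -2) :
    isInt4 (δ.1 - d₁) ∧ isInt8 (δ.2 - d₂) ∧
    (∀ x : V, memL d₁ d₂ x ↔
      ∃ n : ℤ, isInt4 (x.1 - (n : ℚ) • δ.1) ∧ isInt8 (x.2 - (n : ℚ) • δ.2)) := by
  obtain ⟨n, h1, h2⟩ := hδ
  rcases Int.even_or_odd n with ⟨m, rfl⟩ | ⟨m, rfl⟩
  · exfalso
    have e1 : isInt4 δ.1 := fun i => even_aux _ _ m (hd₁ i) (h1 i)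
    have e2 : isInt8 δ.2 := fun i => even_aux _ _ m (hd₂ i) (h2 i)
    obtain ⟨a, ha⟩ := bK_int _ e1
    obtain ⟨b, hb⟩ := bE_int _ e2
    rw [bV, ha, hb] at hroot
    have : 4 * a + 4 * b = -2 := by exact_mod_cast hroot
    omega
  · have e1 : isInt4 (δ.1 - d₁) := fun i => odd_aux _ _ m (hd₁ i) (h1 i)
    have e2 : isInt8 (δ.2 - d₂) := fun i => odd_aux _ _ m (hd₂ i) (h2 i)
    refine ⟨e1, e2, fun x => exists_congr fun k => and_congr ?_ ?_⟩
    · exact forall_congr' fun i => swap_aux _ _ _ k (e1 i)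
    · exact forall_congr' fun i => swap_aux _ _ _ k (e2 i)

end Stmt5
end
end

section
/- With Λ' as above, assume in addition that ⟨d₁,d₁⟩ is odd. Then there exists a root δ ∈ Λ' (i.e. ⟨δ,δ⟩ = −2) with ⟨δ_K,δ_K⟩ = −1 and ⟨δ_E,δ_E⟩ = −1. -/
/-!
STATEMENT 6: With `Λ'` as in the context and `⟨d₁,d₁⟩` odd, there exists a
root `δ ∈ Λ'` (i.e. `⟨δ,δ⟩ = -2`) with `⟨δ_K,δ_K⟩ = -1` and `⟨δ_E,δ_E⟩ = -1`.
-/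

noncomputable section
namespace Stmt6

/-- The bilinear form of K = U(2) ⊕ U(2) on ℚ⁴ (ℚ-bilinear extension):
Gram matrix has blocks [[0,2],[2,0]] and [[0,2],[2,0]]. -/
def bK (x y : Fin 4 → ℚ) : ℚ :=
  2 * (x 0 * y 1 + x 1 * y 0) + 2 * (x 2 * y 3 + x 3 * y 2)

/-- The bilinear form of E = E8(2) on ℚ⁸ (ℚ-bilinear extension):
Gram matrix is −2 times the E8 Cartan matrix. -/
def bE (x y : Fin 8 → ℚ) : ℚ :=
  ∑ i : Fin 8, ∑ j : Fin 8, x i * ((-2 * CartanMatrix.E₈ i j : ℤ) : ℚ) * y j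

/-- `x` lies in the lattice ℤ⁴ ⊂ ℚ⁴. -/
def isInt4 (x : Fin 4 → ℚ) : Prop := ∀ i, ∃ n : ℤ, x i = n

/-- `x` lies in the lattice ℤ⁸ ⊂ ℚ⁸. -/
def isInt8 (x : Fin 8 → ℚ) : Prop := ∀ i, ∃ n : ℤ, x i = n

/-- `x` lies in the dual lattice (1/2)ℤ⁴ ⊂ ℚ⁴ of K. -/
def isHalf4 (x : Fin 4 → ℚ) : Prop := ∀ i, ∃ n : ℤ, x i = n / 2

/-- `x` lies in the dual lattice (1/2)ℤ⁸ ⊂ ℚ⁸ of E. -/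
def isHalf8 (x : Fin 8 → ℚ) : Prop := ∀ i, ∃ n : ℤ, x i = n / 2

/-- The ambient space ℚ⁴ ⊕ ℚ⁸ of K ⊕ E. -/
abbrev V : Type := (Fin 4 → ℚ) × (Fin 8 → ℚ)

/-- The orthogonal direct sum form of K ⊕ E on ℚ⁴ ⊕ ℚ⁸. -/
def bV (x y : V) : ℚ := bK x.1 y.1 + bE x.2 y.2

/-- Membership in the lattice Λ' = ℤ·(d₁,d₂) + (ℤ⁴ ⊕ ℤ⁸) ⊂ ℚ⁴ ⊕ ℚ⁸. -/
def memL (d₁ : Fin 4 → ℚ) (d₂ : Fin 8 → ℚ) (x : V) : Prop :=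
  ∃ n : ℤ, isInt4 (x.1 - (n : ℚ) • d₁) ∧ isInt8 (x.2 - (n : ℚ) • d₂)

/-- Half the E8 Cartan quadratic form, over any commutative ring. -/
def qf {R : Type} [CommRing R] (a b c d e f g h : R) : R :=
  a * a + b * b + c * c + d * d + e * e + f * f + g * g + h * h
    - (a * c + b * d + c * d + d * e + e * f + f * g + g * h)

/-- The 120 positive roots of E8; the decimal digits are the coefficients on simple roots. -/
def posRoots : List ℕ :=
  [1, 10, 11, 100, 110, 111, 1000, 1100,
   1110, 1111, 10000, 11000, 11100, 11110, 11111, 100000,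
   110000, 111000, 111100, 111110, 111111, 1000000, 1010000, 1011000,
   1011100, 1011110, 1011111, 1110000, 1111000, 1111100, 1111110, 1111111,
   1121000, 1121100, 1121110, 1121111, 1122100, 1122110, 1122111, 1122210,
   1122211, 1122221, 10000000, 10100000, 10110000, 10111000, 10111100, 10111110,
   10111111, 11110000, 11111000, 11111100, 11111110, 11111111, 11121000, 11121100,
   11121110, 11121111, 11122100, 11122110, 11122111, 11122210, 11122211, 11122221,
   11221000, 11221100, 11221110, 11221111, 11222100, 11222110, 11222111, 11222210,
   11222211, 11222221, 11232100, 11232110, 11232111, 11232210, 11232211, 11232221,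
   11233210, 11233211, 11233221, 11233321, 12232100, 12232110, 12232111, 12232210,
   12232211, 12232221, 12233210, 12233211, 12233221, 12233321, 12243210, 12243211,
   12243221, 12243321, 12244321, 12343210, 12343211, 12343221, 12343321, 12344321,
   12354321, 13354321, 22343210, 22343211, 22343221, 22343321, 22344321, 22354321,
   22454321, 23354321, 23454321, 23464321, 23465321, 23465421, 23465431, 23465432]

/-- The `i`-th digit, counted from the left of an eight digit number. -/
def dig (n i : ℕ) : ℕ := n / 10 ^ (7 - i) % 10

set_option maxRecDepth 100000 in
theorem posRoots_norm : ∀ n ∈ posRoots,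
    qf (dig n 0 : ℤ) (dig n 1) (dig n 2) (dig n 3) (dig n 4) (dig n 5) (dig n 6) (dig n 7) = 1 := by
  decide +kernel

set_option maxRecDepth 100000 in
set_option synthInstance.maxHeartbeats 400000 in
set_option synthInstance.maxSize 2000 in
theorem posRoots_cover : ∀ a b c d e f g h : ZMod 2, qf a b c d e f g h = 1 →
    ∃ n ∈ posRoots, ((dig n 0 : ℕ) : ZMod 2) = a ∧ ((dig n 1 : ℕ) : ZMod 2) = b ∧
      ((dig n 2 : ℕ) : ZMod 2) = c ∧ ((dig n 3 : ℕ) : ZMod 2) = d ∧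
      ((dig n 4 : ℕ) : ZMod 2) = e ∧ ((dig n 5 : ℕ) : ZMod 2) = f ∧
      ((dig n 6 : ℕ) : ZMod 2) = g ∧ ((dig n 7 : ℕ) : ZMod 2) = h := by
  decide +kernel

theorem cover4 : ∀ a b c d : ZMod 2, a * b + c * d = 1 →
    ∃ w ∈ ([(1, -1, 0, 0), (1, -1, 1, 0), (1, -1, 0, 1),
        (0, 0, 1, -1), (1, 0, 1, -1), (0, 1, 1, -1)] : List (ℤ × ℤ × ℤ × ℤ)),
      (w.1 * w.2.1 + w.2.2.1 * w.2.2.2 = -1) ∧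
      (w.1 : ZMod 2) = a ∧ (w.2.1 : ZMod 2) = b ∧
      (w.2.2.1 : ZMod 2) = c ∧ (w.2.2.2 : ZMod 2) = d := by
  decide +kernel

theorem half_sub {w v : ℤ} (h : (w : ZMod 2) = v) : ∃ n : ℤ, (w : ℚ) / 2 - v / 2 = n := by
  have h1 : ((w - v : ℤ) : ZMod 2) = 0 := by push_cast; rw [h, sub_self]
  rw [ZMod.intCast_zmod_eq_zero_iff_dvd] at h1
  obtain ⟨k, hk⟩ := h1
  refine ⟨k, ?_⟩
  have : (w : ℚ) - v = 2 * k := by exact_mod_cast hk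
  linarith

theorem bE_half (v : Fin 8 → ℤ) : bE (fun i => (v i : ℚ) / 2) (fun i => (v i : ℚ) / 2) =
    -((qf (v 0) (v 1) (v 2) (v 3) (v 4) (v 5) (v 6) (v 7) : ℤ) : ℚ) := by
  simp [bE, qf, CartanMatrix.E₈, Fin.sum_univ_eight]
  ring

theorem bK_half (v : Fin 4 → ℤ) : bK (fun i => (v i : ℚ) / 2) (fun i => (v i : ℚ) / 2) =
    ((v 0 * v 1 + v 2 * v 3 : ℤ) : ℚ) := by
  simp [bK]
  ring

theorem statement6 (d₁ : Fin 4 → ℚ) (d₂ : Fin 8 → ℚ)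
    (hd₁ : isHalf4 d₁) (hd₁' : ¬ isInt4 d₁)
    (hd₂ : isHalf8 d₂) (hd₂' : ¬ isInt8 d₂)
    (heven : ∃ k : ℤ, bK d₁ d₁ + bE d₂ d₂ = 2 * k)
    (hodd : ∃ m : ℤ, bK d₁ d₁ = 2 * m + 1) :
    ∃ δ : V, memL d₁ d₂ δ ∧ bV δ δ = -2 ∧
      bK δ.1 δ.1 = -1 ∧ bE δ.2 δ.2 = -1 := by
  choose u hu using hd₁
  choose v hv using hd₂
  obtain rfl : d₁ = fun i => (u i : ℚ) / 2 := funext hu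
  obtain rfl : d₂ = fun i => (v i : ℚ) / 2 := funext hv
  obtain ⟨k, hk⟩ := heven
  obtain ⟨m, hm⟩ := hodd
  rw [hm, bE_half] at hk
  rw [bK_half] at hm
  have two0 : (2 : ZMod 2) = 0 := by decide
  have hK : u 0 * u 1 + u 2 * u 3 = 2 * m + 1 := by exact_mod_cast hm
  have hE : qf (v 0) (v 1) (v 2) (v 3) (v 4) (v 5) (v 6) (v 7) = 2 * (m - k) + 1 := by
    have : ((qf (v 0) (v 1) (v 2) (v 3) (v 4) (v 5) (v 6) (v 7) : ℤ) : ℚ)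
        = 2 * (m - k) + 1 := by linarith
    exact_mod_cast this
  have hK2 := congrArg (Int.cast : ℤ → ZMod 2) hK
  have hE2 := congrArg (Int.cast : ℤ → ZMod 2) hE
  simp only [qf] at hE2
  push_cast at hK2 hE2
  rw [two0, zero_mul, zero_add] at hK2 hE2
  obtain ⟨w, -, hw, h0, h1, h2, h3⟩ := cover4 _ _ _ _ hK2
  obtain ⟨n, hn, g0, g1, g2, g3, g4, g5, g6, g7⟩ := posRoots_cover _ _ _ _ _ _ _ _ hE2
  have hnorm := posRoots_norm n hn
  let x : Fin 4 → ℤ := ![w.1, w.2.1, w.2.2.1, w.2.2.2]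
  let y : Fin 8 → ℤ := fun i => (dig n i : ℤ)
  have hx : bK (fun i => (x i : ℚ) / 2) (fun i => (x i : ℚ) / 2) = -1 := by
    rw [bK_half]
    have : x 0 * x 1 + x 2 * x 3 = -1 := hw
    rw [this]; norm_num
  have hy : bE (fun i => (y i : ℚ) / 2) (fun i => (y i : ℚ) / 2) = -1 := by
    rw [bE_half]
    have : qf (y 0) (y 1) (y 2) (y 3) (y 4) (y 5) (y 6) (y 7) = 1 := hnorm
    rw [this]; norm_num
  refine ⟨(fun i => (x i : ℚ) / 2, fun i => (y i : ℚ) / 2), ⟨1, ?_, ?_⟩, ?_, hx, hy⟩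
  · have hxu : ∀ i, ((x i : ℤ) : ZMod 2) = u i := by
      intro i
      fin_cases i
      exacts [h0, h1, h2, h3]
    intro i
    simpa using half_sub (hxu i)
  · have hyv : ∀ i, ((y i : ℤ) : ZMod 2) = v i := by
      intro i
      have hc : ((y i : ℤ) : ZMod 2) = ((dig n i : ℕ) : ZMod 2) := Int.cast_natCast _
      rw [hc]
      fin_cases i
      exacts [g0, g1, g2, g3, g4, g5, g6, g7]
    intro i
    simpa only [Int.cast_one, one_smul, Pi.sub_apply] using half_sub (hyv i)
  · simp only [bV]
    rw [hx, hy]; norm_num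

end Stmt6
end
end

section
/- With Λ' as above, assume ⟨d₁,d₁⟩ is odd. Then there exist a root δ ∈ Λ' (⟨δ,δ⟩ = −2) and a point ω ∈ Ω_K such that ⟨ω, δ_K⟩ = 0, where the pairing of ω ∈ ℂ⁴ with δ_K ∈ ℚ⁴ is via the ℂ-bilinear extension of the form of K. (The discriminant locus meets the period domain of the odd-type involution.) -/
/-!
STATEMENT 7: With `Λ'` as in the context and `⟨d₁,d₁⟩` odd, there exist a
root `δ ∈ Λ'` and a point `ω ∈ Ω_K` with `⟨ω, δ_K⟩ = 0` (the pairing via the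
ℂ-bilinear extension of the form of K).
-/

noncomputable section
namespace Stmt7

/-- The bilinear form of K = U(2) ⊕ U(2) on ℚ⁴ (ℚ-bilinear extension):
Gram matrix has blocks [[0,2],[2,0]] and [[0,2],[2,0]]. -/
def bK (x y : Fin 4 → ℚ) : ℚ :=
  2 * (x 0 * y 1 + x 1 * y 0) + 2 * (x 2 * y 3 + x 3 * y 2)

/-- The bilinear form of E = E8(2) on ℚ⁸ (ℚ-bilinear extension):
Gram matrix is −2 times the E8 Cartan matrix. -/
def bE (x y : Fin 8 → ℚ) : ℚ :=
  ∑ i : Fin 8, ∑ j : Fin 8, x i * ((-2 * CartanMatrix.E₈ i j : ℤ) : ℚ) * y j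

/-- `x` lies in the lattice ℤ⁴ ⊂ ℚ⁴. -/
def isInt4 (x : Fin 4 → ℚ) : Prop := ∀ i, ∃ n : ℤ, x i = n

/-- `x` lies in the lattice ℤ⁸ ⊂ ℚ⁸. -/
def isInt8 (x : Fin 8 → ℚ) : Prop := ∀ i, ∃ n : ℤ, x i = n

/-- `x` lies in the dual lattice (1/2)ℤ⁴ ⊂ ℚ⁴ of K. -/
def isHalf4 (x : Fin 4 → ℚ) : Prop := ∀ i, ∃ n : ℤ, x i = n / 2

/-- `x` lies in the dual lattice (1/2)ℤ⁸ ⊂ ℚ⁸ of E. -/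
def isHalf8 (x : Fin 8 → ℚ) : Prop := ∀ i, ∃ n : ℤ, x i = n / 2

/-- The ambient space ℚ⁴ ⊕ ℚ⁸ of K ⊕ E. -/
abbrev V : Type := (Fin 4 → ℚ) × (Fin 8 → ℚ)

/-- The orthogonal direct sum form of K ⊕ E on ℚ⁴ ⊕ ℚ⁸. -/
def bV (x y : V) : ℚ := bK x.1 y.1 + bE x.2 y.2

/-- Membership in the lattice Λ' = ℤ·(d₁,d₂) + (ℤ⁴ ⊕ ℤ⁸) ⊂ ℚ⁴ ⊕ ℚ⁸. -/
def memL (d₁ : Fin 4 → ℚ) (d₂ : Fin 8 → ℚ) (x : V) : Prop :=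
  ∃ n : ℤ, isInt4 (x.1 - (n : ℚ) • d₁) ∧ isInt8 (x.2 - (n : ℚ) • d₂)

/-- The ℂ-bilinear extension of the form of K to ℂ⁴. -/
def bKC (x y : Fin 4 → ℂ) : ℂ :=
  2 * (x 0 * y 1 + x 1 * y 0) + 2 * (x 2 * y 3 + x 3 * y 2)

/-- The period domain Ω_K: ω ∈ ℂ⁴ with ⟨ω,ω⟩ = 0 and ⟨ω,ω̄⟩ a positive real. -/
def OmegaK (ω : Fin 4 → ℂ) : Prop :=
  bKC ω ω = 0 ∧ ∃ t : ℝ, 0 < t ∧ bKC ω (fun i => (starRingEnd ℂ) (ω i)) = (t : ℂ)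

/-- Coercion ℚ⁴ → ℂ⁴. -/
def qc (x : Fin 4 → ℚ) : Fin 4 → ℂ := fun i => ((x i : ℚ) : ℂ)

/-- The positive roots of E8, coordinate `i` being the decimal digit of weight `10 ^ i`. -/
def rootList : List ℕ :=
  [1, 10, 100, 101, 1000, 1010, 1100, 1101,
   1110, 1111, 10000, 11000, 11010, 11100, 11101, 11110,
   11111, 12110, 12111, 12211, 100000, 110000, 111000, 111010,
   111100, 111101, 111110, 111111, 112110, 112111, 112211, 122110,
   122111, 122211, 123211, 123221, 1000000, 1100000, 1110000, 1111000,
   1111010, 1111100, 1111101, 1111110, 1111111, 1112110, 1112111, 1112211,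
   1122110, 1122111, 1122211, 1123211, 1123221, 1222110, 1222111, 1222211,
   1223211, 1223221, 1233211, 1233221, 1234221, 1234321, 1234322, 10000000,
   11000000, 11100000, 11110000, 11111000, 11111010, 11111100, 11111101, 11111110,
   11111111, 11112110, 11112111, 11112211, 11122110, 11122111, 11122211, 11123211,
   11123221, 11222110, 11222111, 11222211, 11223211, 11223221, 11233211, 11233221,
   11234221, 11234321, 11234322, 12222110, 12222111, 12222211, 12223211, 12223221,
   12233211, 12233221, 12234221, 12234321, 12234322, 12333211, 12333221, 12334221,
   12334321, 12334322, 12344221, 12344321, 12344322, 12345321, 12345322, 12345331,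
   12345332, 12345422, 12345432, 12346432, 12356432, 12456432, 13456432, 23456432]

/-- Decimal digits. -/
def dg (N i : ℕ) : ℕ := N / 10 ^ i % 10

/-- The E8 quadratic form. -/
def qz (a b c d e f g h : ℤ) : ℤ :=
  a * a + b * b + c * c + d * d + e * e + f * f + g * g + h * h
    - (a * c + b * d + c * d + d * e + e * f + f * g + g * h)

/-- Zero or one. -/
def bz (a : Bool) : ℤ := bif a then 1 else 0

set_option synthInstance.maxHeartbeats 400000 in
set_option synthInstance.maxSize 4000 in
set_option maxRecDepth 10000 in
lemma key : ∀ a b c d e f g h : Bool,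
    qz (bz a) (bz b) (bz c) (bz d) (bz e) (bz f) (bz g) (bz h) % 2 = 1 →
    ∃ N ∈ rootList,
      ((dg N 0 : ℤ) % 2 = bz a ∧ (dg N 1 : ℤ) % 2 = bz b ∧ (dg N 2 : ℤ) % 2 = bz c ∧
      (dg N 3 : ℤ) % 2 = bz d ∧ (dg N 4 : ℤ) % 2 = bz e ∧ (dg N 5 : ℤ) % 2 = bz f ∧
      (dg N 6 : ℤ) % 2 = bz g ∧ (dg N 7 : ℤ) % 2 = bz h) ∧
      qz (dg N 0) (dg N 1) (dg N 2) (dg N 3) (dg N 4) (dg N 5) (dg N 6) (dg N 7) = 1 := by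
  decide +kernel

lemma exists_bz (n : ℤ) : ∃ a : Bool, n % 2 = bz a := by
  rcases Int.emod_two_eq_zero_or_one n with h | h
  · exact ⟨false, h⟩
  · exact ⟨true, h⟩

lemma bE_half (n : Fin 8 → ℤ) :
    bE (fun i => (n i : ℚ) / 2) (fun i => (n i : ℚ) / 2) =
      -(qz (n 0) (n 1) (n 2) (n 3) (n 4) (n 5) (n 6) (n 7) : ℚ) := by
  simp [bE, qz, Fin.sum_univ_eight, CartanMatrix.E₈]
  ring

/-- Every odd class of E8 mod 2 contains a root. -/
lemma exists_root (n : Fin 8 → ℤ)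
    (h : qz (n 0) (n 1) (n 2) (n 3) (n 4) (n 5) (n 6) (n 7) % 2 = 1) :
    ∃ r : Fin 8 → ℤ, (∀ i, r i % 2 = n i % 2) ∧
      qz (r 0) (r 1) (r 2) (r 3) (r 4) (r 5) (r 6) (r 7) = 1 := by
  choose a ha using fun i => exists_bz (n i)
  have hm : ∀ i, n i ≡ bz (a i) [ZMOD 2] := by
    intro i
    rw [← ha i]
    exact (Int.mod_modEq _ _).symm
  have hq : qz (n 0) (n 1) (n 2) (n 3) (n 4) (n 5) (n 6) (n 7) ≡
      qz (bz (a 0)) (bz (a 1)) (bz (a 2)) (bz (a 3)) (bz (a 4)) (bz (a 5)) (bz (a 6)) (bz (a 7))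
      [ZMOD 2] := by
    unfold qz
    gcongr <;> apply hm
  obtain ⟨N, -, ⟨h0, h1, h2, h3, h4, h5, h6, h7⟩, hN⟩ := key (a 0) (a 1) (a 2) (a 3) (a 4) (a 5)
    (a 6) (a 7) (Eq.trans (Int.ModEq.symm hq) h)
  refine ⟨fun i => (dg N i : ℤ), ?_, hN⟩
  intro i
  rw [ha i]
  fin_cases i <;> assumption

lemma exists_omega (a b c d : Bool) (h : bz a * bz b + bz c * bz d = 1) :
    ∃ ω : Fin 4 → ℂ, OmegaK ω ∧
      bKC ω ![((bz a : ℤ) : ℂ) / 2, -((bz b : ℤ) : ℂ) / 2, ((bz c : ℤ) : ℂ) / 2,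
        -((bz d : ℤ) : ℂ) / 2] = 0 := by
  cases a <;> cases b <;> cases c <;> cases d <;> simp [bz] at h
  · refine ⟨![Complex.I, Complex.I, 1, 1], ⟨?_, 8, by norm_num, ?_⟩, ?_⟩ <;> simp [bKC, bz] <;> ring_nf <;> simp [Complex.I_sq] <;> norm_num
  · refine ⟨![Complex.I, Complex.I - 1, 1, 1 + Complex.I], ⟨?_, 8, by norm_num, ?_⟩, ?_⟩ <;> simp [bKC, bz] <;> ring_nf <;> simp [Complex.I_sq] <;> norm_num
  · refine ⟨![1 - Complex.I, -Complex.I, 1, 1 + Complex.I], ⟨?_, 8, by norm_num, ?_⟩, ?_⟩ <;> simp [bKC, bz] <;> ring_nf <;> simp [Complex.I_sq] <;> norm_num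
  · refine ⟨![1, 1, Complex.I, Complex.I], ⟨?_, 8, by norm_num, ?_⟩, ?_⟩ <;> simp [bKC, bz] <;> ring_nf <;> simp [Complex.I_sq] <;> norm_num
  · refine ⟨![1, 1 + Complex.I, Complex.I, Complex.I - 1], ⟨?_, 8, by norm_num, ?_⟩, ?_⟩ <;> simp [bKC, bz] <;> ring_nf <;> simp [Complex.I_sq] <;> norm_num
  · refine ⟨![1, 1 + Complex.I, 1 - Complex.I, -Complex.I], ⟨?_, 8, by norm_num, ?_⟩, ?_⟩ <;> simp [bKC, bz] <;> ring_nf <;> simp [Complex.I_sq] <;> norm_num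

theorem statement7 (d₁ : Fin 4 → ℚ) (d₂ : Fin 8 → ℚ)
    (hd₁ : isHalf4 d₁) (hd₁' : ¬ isInt4 d₁)
    (hd₂ : isHalf8 d₂) (hd₂' : ¬ isInt8 d₂)
    (heven : ∃ k : ℤ, bK d₁ d₁ + bE d₂ d₂ = 2 * k)
    (hodd : ∃ m : ℤ, bK d₁ d₁ = 2 * m + 1) :
    ∃ δ : V, memL d₁ d₂ δ ∧ bV δ δ = -2 ∧
      ∃ ω : Fin 4 → ℂ, OmegaK ω ∧ bKC ω (qc δ.1) = 0 := by
  choose n hn using hd₁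
  choose p hp using hd₂
  obtain ⟨k, hk⟩ := heven
  obtain ⟨m, hm⟩ := hodd
  have hd2 : d₂ = fun i => (p i : ℚ) / 2 := funext hp
  have hpq : qz (p 0) (p 1) (p 2) (p 3) (p 4) (p 5) (p 6) (p 7) % 2 = 1 := by
    rw [hm, hd2, bE_half] at hk
    have : 2 * m + 1 - qz (p 0) (p 1) (p 2) (p 3) (p 4) (p 5) (p 6) (p 7) = 2 * k := by
      exact_mod_cast (by linarith : (2 * m + 1 - qz (p 0) (p 1) (p 2) (p 3) (p 4) (p 5) (p 6) (p 7) : ℚ)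
        = 2 * k)
    omega
  obtain ⟨r, hr, hr1⟩ := exists_root p hpq
  choose a ha using fun i => exists_bz (n i)
  have hnn : n 0 * n 1 + n 2 * n 3 = 2 * m + 1 := by
    have : (n 0 * n 1 + n 2 * n 3 : ℚ) = 2 * m + 1 := by
      rw [← hm]
      simp only [bK, hn]
      ring
    exact_mod_cast this
  have hmm : ∀ i, n i ≡ bz (a i) [ZMOD 2] := by
    intro i
    rw [← ha i]
    exact (Int.mod_modEq _ _).symm
  have hab : bz (a 0) * bz (a 1) + bz (a 2) * bz (a 3) = 1 := by
    have hq : n 0 * n 1 + n 2 * n 3 ≡ bz (a 0) * bz (a 1) + bz (a 2) * bz (a 3) [ZMOD 2] := by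
      gcongr <;> apply hmm
    rw [hnn] at hq
    have h3 : (bz (a 0) * bz (a 1) + bz (a 2) * bz (a 3)) % 2 = 1 := by
      have := hq.symm
      unfold Int.ModEq at this
      omega
    revert h3
    generalize a 0 = x, a 1 = y, a 2 = z, a 3 = w
    revert x y z w
    decide
  obtain ⟨ω, hω, hω0⟩ := exists_omega _ _ _ _ hab
  refine ⟨(![((bz (a 0) : ℤ) : ℚ) / 2, -((bz (a 1) : ℤ) : ℚ) / 2, ((bz (a 2) : ℤ) : ℚ) / 2,
        -((bz (a 3) : ℤ) : ℚ) / 2], fun i => (r i : ℚ) / 2), ⟨1, ?_, ?_⟩, ?_, ω, hω, ?_⟩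
  · have half : ∀ x y : ℤ, x % 2 = y % 2 → ∃ z : ℤ, (x : ℚ) / 2 - (y : ℚ) / 2 = z := by
      intro x y hxy
      refine ⟨(x - y) / 2, ?_⟩
      have : x = y + 2 * ((x - y) / 2) := by omega
      have h' : (x : ℚ) = y + 2 * (((x - y) / 2 : ℤ) : ℚ) := by exact_mod_cast this
      rw [h']
      ring
    have e0 := half (bz (a 0)) (n 0) (hmm 0).symm
    have e1 := half (-bz (a 1)) (n 1) (by have := ha 1; omega)
    have e2 := half (bz (a 2)) (n 2) (hmm 2).symm
    have e3 := half (-bz (a 3)) (n 3) (by have := ha 3; omega)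
    push_cast at e1 e3
    intro i
    fin_cases i <;> simp [hn] <;> assumption
  · intro i
    refine ⟨(r i - p i) / 2, ?_⟩
    have := hr i
    have : r i = p i + 2 * ((r i - p i) / 2) := by omega
    have h' : (r i : ℚ) = p i + 2 * (((r i - p i) / 2 : ℤ) : ℚ) := by exact_mod_cast this
    simp only [hp, Pi.sub_apply, Pi.smul_apply, Int.cast_one, one_smul]
    rw [h']
    ring
  · have hab' : (bz (a 0) * bz (a 1) + bz (a 2) * bz (a 3) : ℚ) = 1 := by exact_mod_cast hab
    simp only [bV, bE_half, hr1]
    simp [bK]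
    linear_combination (-1 : ℚ) * hab'
  · rw [← hω0]
    congr 1
    ext i
    fin_cases i <;> simp [qc]

end Stmt7
end
end

section
/- With Λ' as above, assume ⟨d₁,d₁⟩ is even. Then for every root δ ∈ Λ' (⟨δ,δ⟩ = −2) and every ω ∈ Ω_K one has ⟨ω, δ_K⟩ ≠ 0, where the pairing of ω ∈ ℂ⁴ with δ_K ∈ ℚ⁴ is via the ℂ-bilinear extension of the form of K. (The discriminant locus does not meet the period domain of the even-type involution.) -/
/-!
STATEMENT 8: With `Λ'` as in the context and `⟨d₁,d₁⟩` even, for every root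
`δ ∈ Λ'` and every `ω ∈ Ω_K` one has `⟨ω, δ_K⟩ ≠ 0`.
-/

noncomputable section
namespace Stmt8

/-- The bilinear form of K = U(2) ⊕ U(2) on ℚ⁴ (ℚ-bilinear extension):
Gram matrix has blocks [[0,2],[2,0]] and [[0,2],[2,0]]. -/
def bK (x y : Fin 4 → ℚ) : ℚ :=
  2 * (x 0 * y 1 + x 1 * y 0) + 2 * (x 2 * y 3 + x 3 * y 2)

/-- The bilinear form of E = E8(2) on ℚ⁸ (ℚ-bilinear extension):
Gram matrix is −2 times the E8 Cartan matrix. -/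
def bE (x y : Fin 8 → ℚ) : ℚ :=
  ∑ i : Fin 8, ∑ j : Fin 8, x i * ((-2 * CartanMatrix.E₈ i j : ℤ) : ℚ) * y j

/-- `x` lies in the lattice ℤ⁴ ⊂ ℚ⁴. -/
def isInt4 (x : Fin 4 → ℚ) : Prop := ∀ i, ∃ n : ℤ, x i = n

/-- `x` lies in the lattice ℤ⁸ ⊂ ℚ⁸. -/
def isInt8 (x : Fin 8 → ℚ) : Prop := ∀ i, ∃ n : ℤ, x i = n

/-- `x` lies in the dual lattice (1/2)ℤ⁴ ⊂ ℚ⁴ of K. -/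
def isHalf4 (x : Fin 4 → ℚ) : Prop := ∀ i, ∃ n : ℤ, x i = n / 2

/-- `x` lies in the dual lattice (1/2)ℤ⁸ ⊂ ℚ⁸ of E. -/
def isHalf8 (x : Fin 8 → ℚ) : Prop := ∀ i, ∃ n : ℤ, x i = n / 2

/-- The ambient space ℚ⁴ ⊕ ℚ⁸ of K ⊕ E. -/
abbrev V : Type := (Fin 4 → ℚ) × (Fin 8 → ℚ)

/-- The orthogonal direct sum form of K ⊕ E on ℚ⁴ ⊕ ℚ⁸. -/
def bV (x y : V) : ℚ := bK x.1 y.1 + bE x.2 y.2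

/-- Membership in the lattice Λ' = ℤ·(d₁,d₂) + (ℤ⁴ ⊕ ℤ⁸) ⊂ ℚ⁴ ⊕ ℚ⁸. -/
def memL (d₁ : Fin 4 → ℚ) (d₂ : Fin 8 → ℚ) (x : V) : Prop :=
  ∃ n : ℤ, isInt4 (x.1 - (n : ℚ) • d₁) ∧ isInt8 (x.2 - (n : ℚ) • d₂)

/-- The ℂ-bilinear extension of the form of K to ℂ⁴. -/
def bKC (x y : Fin 4 → ℂ) : ℂ :=
  2 * (x 0 * y 1 + x 1 * y 0) + 2 * (x 2 * y 3 + x 3 * y 2)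

/-- The period domain Ω_K: ω ∈ ℂ⁴ with ⟨ω,ω⟩ = 0 and ⟨ω,ω̄⟩ a positive real. -/
def OmegaK (ω : Fin 4 → ℂ) : Prop :=
  bKC ω ω = 0 ∧ ∃ t : ℝ, 0 < t ∧ bKC ω (fun i => (starRingEnd ℂ) (ω i)) = (t : ℂ)

/-- Coercion ℚ⁴ → ℂ⁴. -/
def qc (x : Fin 4 → ℚ) : Fin 4 → ℂ := fun i => ((x i : ℚ) : ℂ)

theorem sig_plane (p q u v a b a' b' c d c' d' s : ℝ) (hs : 0 < s)
    (hA : a ^ 2 + b ^ 2 - a' ^ 2 - b' ^ 2 = s) (hB : c ^ 2 + d ^ 2 - c' ^ 2 - d' ^ 2 = s)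
    (hAB : a * c + b * d = a' * c' + b' * d')
    (h1 : p * a + q * b = u * a' + v * b') (h2 : p * c + q * d = u * c' + v * d')
    (h : u ^ 2 + v ^ 2 ≤ p ^ 2 + q ^ 2) : p = 0 ∧ q = 0 ∧ u = 0 ∧ v = 0 := by
  have hD : 0 < (a * d - b * c) ^ 2 := by
    have e : (a * d - b * c) ^ 2 = (s + a' ^ 2 + b' ^ 2) * (s + c' ^ 2 + d' ^ 2)
        - (a' * c' + b' * d') ^ 2 := by
      rw [← hAB]
      have e1 : s + a' ^ 2 + b' ^ 2 = a ^ 2 + b ^ 2 := by linarith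
      have e2 : s + c' ^ 2 + d' ^ 2 = c ^ 2 + d ^ 2 := by linarith
      rw [e1, e2]; ring
    rw [e]
    have : (s + a' ^ 2 + b' ^ 2) * (s + c' ^ 2 + d' ^ 2) - (a' * c' + b' * d') ^ 2
      = s ^ 2 + s * (a' ^ 2 + b' ^ 2 + c' ^ 2 + d' ^ 2) + (a' * d' - b' * c') ^ 2 := by ring
    rw [this]; positivity
  have hD0 : a * d - b * c ≠ 0 := by
    intro h0; rw [h0] at hD; norm_num at hD
  obtain ⟨α, β, hp, hq⟩ : ∃ α β : ℝ, p = α * a + β * c ∧ q = α * b + β * d := by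
    refine ⟨(p * d - q * c) / (a * d - b * c), (a * q - b * p) / (a * d - b * c), ?_, ?_⟩
    · rw [div_mul_eq_mul_div, div_mul_eq_mul_div, ← add_div, eq_div_iff hD0]; ring
    · rw [div_mul_eq_mul_div, div_mul_eq_mul_div, ← add_div, eq_div_iff hD0]; ring
  have hC : p ^ 2 + q ^ 2 = u * (α * a' + β * c') + v * (α * b' + β * d') := by
    have : p ^ 2 + q ^ 2 = α * (p * a + q * b) + β * (p * c + q * d) := by
      linear_combination p * hp + q * hq
    rw [this, h1, h2]; ring
  have hN : (α * a' + β * c') ^ 2 + (α * b' + β * d') ^ 2 =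
      p ^ 2 + q ^ 2 - s * (α ^ 2 + β ^ 2) := by
    rw [hp, hq]
    linear_combination (-α ^ 2) * hA - β ^ 2 * hB - 2 * α * β * hAB
  set e := α * a' + β * c'
  set f := α * b' + β * d'
  have hz : s * (α ^ 2 + β ^ 2) ≤ 0 := by
    nlinarith [sq_nonneg (u - e), sq_nonneg (v - f)]
  have hz' : α ^ 2 + β ^ 2 ≤ 0 := by
    by_contra hh
    push Not at hh
    have := mul_pos hs hh
    linarith
  have ha : α = 0 := pow_eq_zero_iff (two_ne_zero) |>.1
    (by linarith [sq_nonneg α, sq_nonneg β])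
  have hb : β = 0 := pow_eq_zero_iff (two_ne_zero) |>.1
    (by linarith [sq_nonneg α, sq_nonneg β])
  have hp0 : p = 0 := by rw [hp, ha, hb]; ring
  have hq0 : q = 0 := by rw [hq, ha, hb]; ring
  rw [hp0, hq0] at h
  refine ⟨hp0, hq0, pow_eq_zero_iff (two_ne_zero) |>.1 ?_,
    pow_eq_zero_iff (two_ne_zero) |>.1 ?_⟩ <;> linarith [sq_nonneg u, sq_nonneg v]

theorem sig_K (x : Fin 4 → ℚ) (ω : Fin 4 → ℂ) (hω : OmegaK ω) (h0 : bKC ω (qc x) = 0)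
    (hx : 0 ≤ bK x x) : x = 0 := by
  obtain ⟨hω1, t, ht, hω2⟩ := hω
  have r1 := congrArg Complex.re hω1
  have i1 := congrArg Complex.im hω1
  have r2 := congrArg Complex.re hω2
  have r3 := congrArg Complex.re h0
  have i3 := congrArg Complex.im h0
  simp [bKC, qc] at r1 i1 r2 r3 i3
  have hx' : (0 : ℝ) ≤ ((bK x x : ℚ) : ℝ) := by exact_mod_cast hx
  simp only [bK] at hx'
  push_cast at hx'
  generalize (ω 0).re = A0 at *
  generalize (ω 1).re = A1 at *
  generalize (ω 2).re = A2 at *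
  generalize (ω 3).re = A3 at *
  generalize (ω 0).im = B0 at *
  generalize (ω 1).im = B1 at *
  generalize (ω 2).im = B2 at *
  generalize (ω 3).im = B3 at *
  have key := sig_plane (x 0 + x 1) (x 2 + x 3) (x 0 - x 1) (x 2 - x 3)
    (A0 + A1) (A2 + A3) (A0 - A1) (A2 - A3) (B0 + B1) (B2 + B3) (B0 - B1) (B2 - B3)
    (t / 2) (by linarith) (by linarith) (by linarith) (by linarith) (by linarith)
    (by linarith) (by linarith)
  obtain ⟨k1, k2, k3, k4⟩ := key
  have e0 : (x 0 : ℝ) = 0 := by linarith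
  have e1 : (x 1 : ℝ) = 0 := by linarith
  have e2 : (x 2 : ℝ) = 0 := by linarith
  have e3 : (x 3 : ℝ) = 0 := by linarith
  norm_cast at e0 e1 e2 e3
  funext i
  fin_cases i <;> simpa

theorem bE_formula (x : Fin 8 → ℚ) : bE x x = -4 * (x 0 ^ 2 + x 1 ^ 2 + x 2 ^ 2 + x 3 ^ 2
    + x 4 ^ 2 + x 5 ^ 2 + x 6 ^ 2 + x 7 ^ 2 - x 0 * x 2 - x 1 * x 3 - x 2 * x 3 - x 3 * x 4
    - x 4 * x 5 - x 5 * x 6 - x 6 * x 7) := by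
  simp [bE, Fin.sum_univ_eight, CartanMatrix.E₈]
  ring

theorem bE_def (x : Fin 8 → ℚ) (h : 0 ≤ bE x x) : x = 0 := by
  have e : bE x x = -2 * (2 * (x 0 - x 2 / 2) ^ 2 + 2 * (x 1 - x 3 / 2) ^ 2
      + 3 / 2 * (x 2 - 2 / 3 * x 3) ^ 2 + 5 / 6 * (x 3 - 6 / 5 * x 4) ^ 2
      + 4 / 5 * (x 4 - 5 / 4 * x 5) ^ 2 + 3 / 4 * (x 5 - 4 / 3 * x 6) ^ 2
      + 2 / 3 * (x 6 - 3 / 2 * x 7) ^ 2 + 1 / 2 * x 7 ^ 2) := by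
    rw [bE_formula]; ring
  rw [e] at h
  have p0 := sq_nonneg (x 0 - x 2 / 2)
  have p1 := sq_nonneg (x 1 - x 3 / 2)
  have p2 := sq_nonneg (x 2 - 2 / 3 * x 3)
  have p3 := sq_nonneg (x 3 - 6 / 5 * x 4)
  have p4 := sq_nonneg (x 4 - 5 / 4 * x 5)
  have p5 := sq_nonneg (x 5 - 4 / 3 * x 6)
  have p6 := sq_nonneg (x 6 - 3 / 2 * x 7)
  have p7 := sq_nonneg (x 7)
  have z7 : x 7 = 0 := pow_eq_zero_iff (two_ne_zero) |>.1 (by linarith)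
  have z6 : x 6 - 3 / 2 * x 7 = 0 := pow_eq_zero_iff (two_ne_zero) |>.1 (by linarith)
  have z5 : x 5 - 4 / 3 * x 6 = 0 := pow_eq_zero_iff (two_ne_zero) |>.1 (by linarith)
  have z4 : x 4 - 5 / 4 * x 5 = 0 := pow_eq_zero_iff (two_ne_zero) |>.1 (by linarith)
  have z3 : x 3 - 6 / 5 * x 4 = 0 := pow_eq_zero_iff (two_ne_zero) |>.1 (by linarith)
  have z2 : x 2 - 2 / 3 * x 3 = 0 := pow_eq_zero_iff (two_ne_zero) |>.1 (by linarith)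
  have z1 : x 1 - x 3 / 2 = 0 := pow_eq_zero_iff (two_ne_zero) |>.1 (by linarith)
  have z0 : x 0 - x 2 / 2 = 0 := pow_eq_zero_iff (two_ne_zero) |>.1 (by linarith)
  funext i
  fin_cases i <;> simp <;> linarith

theorem statement8 (d₁ : Fin 4 → ℚ) (d₂ : Fin 8 → ℚ)
    (hd₁ : isHalf4 d₁) (hd₁' : ¬ isInt4 d₁)
    (hd₂ : isHalf8 d₂) (hd₂' : ¬ isInt8 d₂)
    (heven : ∃ k : ℤ, bK d₁ d₁ + bE d₂ d₂ = 2 * k)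
    (heven₁ : ∃ m : ℤ, bK d₁ d₁ = 2 * m) :
    ∀ δ : V, memL d₁ d₂ δ → bV δ δ = -2 →
      ∀ ω : Fin 4 → ℂ, OmegaK ω → bKC ω (qc δ.1) ≠ 0 := by
  rintro ⟨x, y⟩ ⟨n, hx, hy⟩ hroot ω hω h0
  simp only [bV] at hroot hx hy h0
  choose h hh using hd₁
  choose g hg using hd₂
  choose z hz using hx
  choose w hw using hy
  simp only [Pi.sub_apply, Pi.smul_apply, smul_eq_mul] at hz hw
  obtain ⟨m, hm⟩ := heven₁
  have hxi : ∀ i, x i = n * (h i / 2) + z i := by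
    intro i; rw [← hz i, hh i]; ring
  have hyi : ∀ i, y i = n * (g i / 2) + w i := by
    intro i; rw [← hw i, hg i]; ring
  rcases Int.even_or_odd' n with ⟨k, hk | hk⟩
  · -- `n` even: both components are integral, so the norm is divisible by 4
    have hxi' : ∀ i, x i = ((k * h i + z i : ℤ) : ℚ) := by
      intro i; rw [hxi, hk]; push_cast; ring
    have hyi' : ∀ i, y i = ((k * g i + w i : ℤ) : ℚ) := by
      intro i; rw [hyi, hk]; push_cast; ring
    rw [bE_formula] at hroot
    simp only [bK, hxi', hyi'] at hroot
    generalize hX : (fun i => k * h i + z i) = X at *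
    generalize hY : (fun i => k * g i + w i) = Y at *
    have hX' : ∀ i, k * h i + z i = X i := fun i => congrFun hX i
    have hY' : ∀ i, k * g i + w i = Y i := fun i => congrFun hY i
    simp only [hX', hY'] at hroot
    norm_cast at hroot
    have : (4 : ℤ) ∣ 2 := by
      refine ⟨-(X 0 * X 1 + X 2 * X 3) + (Y 0 ^ 2 + Y 1 ^ 2 + Y 2 ^ 2 + Y 3 ^ 2
        + Y 4 ^ 2 + Y 5 ^ 2 + Y 6 ^ 2 + Y 7 ^ 2 - Y 0 * Y 2 - Y 1 * Y 3 - Y 2 * Y 3 - Y 3 * Y 4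
        - Y 4 * Y 5 - Y 5 * Y 6 - Y 6 * Y 7), ?_⟩
      push_cast at hroot
      linarith
    omega
  · -- `n` odd
    have hneg : bK x x < 0 := by
      by_contra hc
      push Not at hc
      have hx0 := sig_K x ω hω h0 hc
      apply hd₁'
      intro i
      refine ⟨-z i - k * h i, ?_⟩
      have := hxi i
      rw [hx0, hk] at this
      rw [hh]
      push_cast at this ⊢
      simp only [Pi.zero_apply] at this
      linarith
    obtain ⟨r, hr⟩ : ∃ r : ℤ, bK x x = 2 * r := by
      refine ⟨n ^ 2 * m + n * (h 0 * z 1 + h 1 * z 0 + h 2 * z 3 + h 3 * z 2)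
        + 2 * (z 0 * z 1 + z 2 * z 3), ?_⟩
      simp only [bK, hh] at hm
      simp only [bK, hxi]
      push_cast
      linear_combination (n : ℚ) ^ 2 * hm
    have hr1 : r ≤ -1 := by
      have : (r : ℚ) < 0 := by linarith
      have : r < 0 := by exact_mod_cast this
      omega
    have hr2 : (r : ℚ) ≤ -1 := by exact_mod_cast hr1
    have hy0 := bE_def y (by linarith)
    apply hd₂'
    intro i
    refine ⟨-w i - k * g i, ?_⟩
    have := hyi i
    rw [hy0, hk] at this
    rw [hg]
    push_cast at this ⊢
    simp only [Pi.zero_apply] at this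
    linarith

end Stmt8
end
end

section
/- With Λ' as above, assume ⟨d₁,d₁⟩ is odd. Define I_μ : ℚ⁴ ⊕ ℚ⁸ → ℚ⁴ ⊕ ℚ⁸ by I_μ(x_K, x_E) := (−x_K, x_E); then I_μ(Λ') = Λ'. Let d, δ ∈ Λ' be roots (⟨d,d⟩ = ⟨δ,δ⟩ = −2) with ⟨δ_K,δ_K⟩ < 0. Then {ω ∈ Ω_K : ⟨ω, d_K⟩ = 0} = {ω ∈ Ω_K : ⟨ω, δ_K⟩ = 0} if and only if d ∈ {δ, −δ, I_μ(δ), −I_μ(δ)}. -/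
/-!
STATEMENT 9: With `Λ'` as in the context and `⟨d₁,d₁⟩` odd, the involution
`I_μ(x_K, x_E) := (−x_K, x_E)` preserves `Λ'`, and for roots `d, δ ∈ Λ'`
with `⟨δ_K,δ_K⟩ < 0` one has
`{ω ∈ Ω_K : ⟨ω,d_K⟩ = 0} = {ω ∈ Ω_K : ⟨ω,δ_K⟩ = 0}` iff
`d ∈ {δ, −δ, I_μ(δ), −I_μ(δ)}`.
-/

noncomputable section
namespace Stmt9

/-- The bilinear form of K = U(2) ⊕ U(2) on ℚ⁴ (ℚ-bilinear extension):
Gram matrix has blocks [[0,2],[2,0]] and [[0,2],[2,0]]. -/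
def bK (x y : Fin 4 → ℚ) : ℚ :=
  2 * (x 0 * y 1 + x 1 * y 0) + 2 * (x 2 * y 3 + x 3 * y 2)

/-- The bilinear form of E = E8(2) on ℚ⁸ (ℚ-bilinear extension):
Gram matrix is −2 times the E8 Cartan matrix. -/
def bE (x y : Fin 8 → ℚ) : ℚ :=
  ∑ i : Fin 8, ∑ j : Fin 8, x i * ((-2 * CartanMatrix.E₈ i j : ℤ) : ℚ) * y j

/-- `x` lies in the lattice ℤ⁴ ⊂ ℚ⁴. -/
def isInt4 (x : Fin 4 → ℚ) : Prop := ∀ i, ∃ n : ℤ, x i = n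

/-- `x` lies in the lattice ℤ⁸ ⊂ ℚ⁸. -/
def isInt8 (x : Fin 8 → ℚ) : Prop := ∀ i, ∃ n : ℤ, x i = n

/-- `x` lies in the dual lattice (1/2)ℤ⁴ ⊂ ℚ⁴ of K. -/
def isHalf4 (x : Fin 4 → ℚ) : Prop := ∀ i, ∃ n : ℤ, x i = n / 2

/-- `x` lies in the dual lattice (1/2)ℤ⁸ ⊂ ℚ⁸ of E. -/
def isHalf8 (x : Fin 8 → ℚ) : Prop := ∀ i, ∃ n : ℤ, x i = n / 2

/-- The ambient space ℚ⁴ ⊕ ℚ⁸ of K ⊕ E. -/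
abbrev V : Type := (Fin 4 → ℚ) × (Fin 8 → ℚ)

/-- The orthogonal direct sum form of K ⊕ E on ℚ⁴ ⊕ ℚ⁸. -/
def bV (x y : V) : ℚ := bK x.1 y.1 + bE x.2 y.2

/-- Membership in the lattice Λ' = ℤ·(d₁,d₂) + (ℤ⁴ ⊕ ℤ⁸) ⊂ ℚ⁴ ⊕ ℚ⁸. -/
def memL (d₁ : Fin 4 → ℚ) (d₂ : Fin 8 → ℚ) (x : V) : Prop :=
  ∃ n : ℤ, isInt4 (x.1 - (n : ℚ) • d₁) ∧ isInt8 (x.2 - (n : ℚ) • d₂)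

/-- The ℂ-bilinear extension of the form of K to ℂ⁴. -/
def bKC (x y : Fin 4 → ℂ) : ℂ :=
  2 * (x 0 * y 1 + x 1 * y 0) + 2 * (x 2 * y 3 + x 3 * y 2)

/-- The period domain Ω_K: ω ∈ ℂ⁴ with ⟨ω,ω⟩ = 0 and ⟨ω,ω̄⟩ a positive real. -/
def OmegaK (ω : Fin 4 → ℂ) : Prop :=
  bKC ω ω = 0 ∧ ∃ t : ℝ, 0 < t ∧ bKC ω (fun i => (starRingEnd ℂ) (ω i)) = (t : ℂ)

/-- Coercion ℚ⁴ → ℂ⁴. -/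
def qc (x : Fin 4 → ℚ) : Fin 4 → ℂ := fun i => ((x i : ℚ) : ℂ)

/-- The involution `I_μ(x_K, x_E) = (−x_K, x_E)`. -/
def Imu (x : V) : V := (-x.1, x.2)

/-- The quadratic form of E8 (half the norm). -/
def qE (x : Fin 8 → ℚ) : ℚ :=
  x 0 ^ 2 + x 1 ^ 2 + x 2 ^ 2 + x 3 ^ 2 + x 4 ^ 2 + x 5 ^ 2 + x 6 ^ 2 + x 7 ^ 2
    - x 0 * x 2 - x 1 * x 3 - x 2 * x 3 - x 3 * x 4 - x 4 * x 5 - x 5 * x 6 - x 6 * x 7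

lemma bE_eq (x : Fin 8 → ℚ) : bE x x = -4 * qE x := by
  simp only [bE, qE, Fin.sum_univ_eight, CartanMatrix.E₈]
  simp [Matrix.of_apply]
  ring

lemma qE_sq (x : Fin 8 → ℚ) : qE x =
    (x 0 - x 2 / 2) ^ 2 + 3 / 4 * (x 2 - 2 / 3 * x 3) ^ 2 + (x 1 - x 3 / 2) ^ 2
    + (x 7 - x 6 / 2) ^ 2 + 3 / 4 * (x 6 - 2 / 3 * x 5) ^ 2 + 2 / 3 * (x 5 - 3 / 4 * x 4) ^ 2
    + 5 / 8 * (x 4 - 4 / 5 * x 3) ^ 2 + 1 / 60 * x 3 ^ 2 := by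
  unfold qE; ring

lemma qE_nonneg (x : Fin 8 → ℚ) : 0 ≤ qE x := by
  rw [qE_sq]; positivity

lemma qE_zero (x : Fin 8 → ℚ) (h : qE x = 0) : x = 0 := by
  rw [qE_sq] at h
  have a1 := sq_nonneg (x 0 - x 2 / 2)
  have a2 := sq_nonneg (x 2 - 2 / 3 * x 3)
  have a3 := sq_nonneg (x 1 - x 3 / 2)
  have a4 := sq_nonneg (x 7 - x 6 / 2)
  have a5 := sq_nonneg (x 6 - 2 / 3 * x 5)
  have a6 := sq_nonneg (x 5 - 3 / 4 * x 4)
  have a7 := sq_nonneg (x 4 - 4 / 5 * x 3)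
  have a8 := sq_nonneg (x 3)
  have b1 : x 0 - x 2 / 2 = 0 := pow_eq_zero_iff (two_ne_zero) |>.1 (by linarith)
  have b2 : x 2 - 2 / 3 * x 3 = 0 := pow_eq_zero_iff (two_ne_zero) |>.1 (by linarith)
  have b3 : x 1 - x 3 / 2 = 0 := pow_eq_zero_iff (two_ne_zero) |>.1 (by linarith)
  have b4 : x 7 - x 6 / 2 = 0 := pow_eq_zero_iff (two_ne_zero) |>.1 (by linarith)
  have b5 : x 6 - 2 / 3 * x 5 = 0 := pow_eq_zero_iff (two_ne_zero) |>.1 (by linarith)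
  have b6 : x 5 - 3 / 4 * x 4 = 0 := pow_eq_zero_iff (two_ne_zero) |>.1 (by linarith)
  have b7 : x 4 - 4 / 5 * x 3 = 0 := pow_eq_zero_iff (two_ne_zero) |>.1 (by linarith)
  have b8 : x 3 = 0 := pow_eq_zero_iff (two_ne_zero) |>.1 (by linarith)
  funext i
  fin_cases i <;> simp <;> linarith

lemma qE_int (x : Fin 8 → ℚ) (h : isInt8 x) : ∃ n : ℤ, qE x = n := by
  choose f hf using h
  refine ⟨f 0 ^ 2 + f 1 ^ 2 + f 2 ^ 2 + f 3 ^ 2 + f 4 ^ 2 + f 5 ^ 2 + f 6 ^ 2 + f 7 ^ 2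
    - f 0 * f 2 - f 1 * f 3 - f 2 * f 3 - f 3 * f 4 - f 4 * f 5 - f 5 * f 6 - f 6 * f 7, ?_⟩
  simp only [qE, hf]; push_cast; ring

lemma half_shift (a x : ℚ) (n p : ℤ) (h : ∃ m : ℤ, a = m / 2) (hn : ∃ m : ℤ, x - n * a = m)
    (hp : n % 2 = p % 2) : ∃ m : ℤ, x - p * a = m := by
  obtain ⟨m, rfl⟩ := h
  obtain ⟨k, hk⟩ := hn
  obtain ⟨j, hj⟩ : ∃ j, n - p = 2 * j := ⟨(n - p) / 2, by omega⟩
  refine ⟨k + j * m, ?_⟩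
  have : (n : ℚ) = p + 2 * j := by exact_mod_cast (by omega : n = p + 2 * j)
  push_cast
  rw [← hk, this]; ring

/-- Roots lie in the nontrivial coset. -/
lemma root_coset {d₁ : Fin 4 → ℚ} {d₂ : Fin 8 → ℚ} (hd₁ : isHalf4 d₁) (hd₂ : isHalf8 d₂)
    {d : V} (hd : memL d₁ d₂ d) (hr : bV d d = -2) :
    isInt4 (d.1 - d₁) ∧ isInt8 (d.2 - d₂) := by
  obtain ⟨n, h4, h8⟩ := hd
  rcases Int.emod_two_eq_zero_or_one n with h | h
  · exfalso
    have g4 : ∀ i, ∃ m : ℤ, d.1 i = m := fun i => by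
      simpa using half_shift (d₁ i) (d.1 i) n 0 (hd₁ i) (by simpa using h4 i) (by simpa using h)
    have g8 : isInt8 d.2 := fun i => by
      simpa using half_shift (d₂ i) (d.2 i) n 0 (hd₂ i) (by simpa using h8 i) (by simpa using h)
    obtain ⟨q, hq⟩ := qE_int _ g8
    choose f hf using g4
    simp only [bV, bE_eq, bK, hq, hf] at hr
    have : 4 * (f 0 * f 1 + f 2 * f 3 - q) = -2 := by
      have : (4 * (f 0 * f 1 + f 2 * f 3 - q) : ℚ) = -2 := by linarith
      exact_mod_cast this
    omega
  · exact ⟨fun i => by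
      simpa using half_shift (d₁ i) (d.1 i) n 1 (hd₁ i) (by simpa using h4 i) (by simpa using h),
      fun i => by
      simpa using half_shift (d₂ i) (d.2 i) n 1 (hd₂ i) (by simpa using h8 i) (by simpa using h)⟩

lemma bK_odd {d₁ x : Fin 4 → ℚ} (hd₁ : isHalf4 d₁) (hodd : ∃ m : ℤ, bK d₁ d₁ = 2 * m + 1)
    (h : isInt4 (x - d₁)) : ∃ m : ℤ, bK x x = 2 * m + 1 := by
  obtain ⟨m, hm⟩ := hodd
  choose f hf using hd₁
  choose g hg using h
  have hx : ∀ i, x i = f i / 2 + g i := fun i => by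
    rw [← hg i, ← hf i]; simp
  refine ⟨m + (f 0 * g 1 + f 1 * g 0 + f 2 * g 3 + f 3 * g 2) + 2 * (g 0 * g 1 + g 2 * g 3), ?_⟩
  simp only [bK, hf] at hm
  simp only [bK, hx]
  push_cast
  linarith

lemma root_neg {d₁ : Fin 4 → ℚ} {d₂ : Fin 8 → ℚ} (hd₁ : isHalf4 d₁) (hd₂ : isHalf8 d₂)
    (hodd : ∃ m : ℤ, bK d₁ d₁ = 2 * m + 1)
    {d : V} (hd : memL d₁ d₂ d) (hr : bV d d = -2) (hneg : bK d.1 d.1 ≤ 0) :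
    bK d.1 d.1 = -1 ∧ qE d.2 = 1 / 4 := by
  obtain ⟨m, hm⟩ := bK_odd hd₁ hodd (root_coset hd₁ hd₂ hd hr).1
  have h0 := qE_nonneg d.2
  simp only [bV, bE_eq] at hr
  have h1 : 2 * m + 1 ≤ 0 := by rw [hm] at hneg; exact_mod_cast hneg
  have h2 : -2 ≤ 2 * m + 1 := by
    have : (-2 : ℚ) ≤ 2 * m + 1 := by linarith
    exact_mod_cast this
  obtain rfl : m = -1 := by omega
  push_cast at hm
  constructor <;> linarith

lemma E_pm {d₂ x y : Fin 8 → ℚ} (hd₂ : isHalf8 d₂) (hx : isInt8 (x - d₂)) (hy : isInt8 (y - d₂))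
    (qx : qE x = 1 / 4) (qy : qE y = 1 / 4) : x = y ∨ x = -y := by
  have h1 : isInt8 (x - y) := fun i => by
    obtain ⟨a, ha⟩ := hx i
    obtain ⟨b, hb⟩ := hy i
    refine ⟨a - b, ?_⟩
    push_cast; rw [← ha, ← hb]; simp
  have h2 : isInt8 (x + y) := fun i => by
    obtain ⟨a, ha⟩ := hx i
    obtain ⟨b, hb⟩ := hy i
    obtain ⟨c, hc⟩ := hd₂ i
    refine ⟨a + b + c, ?_⟩
    simp only [Pi.sub_apply, Pi.add_apply] at *
    push_cast; linarith
  obtain ⟨p, hp⟩ := qE_int _ h1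
  obtain ⟨q, hq⟩ := qE_int _ h2
  have hs : qE (x - y) + qE (x + y) = 1 := by
    have : qE (x - y) + qE (x + y) = 2 * (qE x + qE y) := by
      simp only [qE, Pi.sub_apply, Pi.add_apply]; ring
    rw [this, qx, qy]; norm_num
  have p0 : 0 ≤ p := by have := qE_nonneg (x - y); rw [hp] at this; exact_mod_cast this
  have q0 : 0 ≤ q := by have := qE_nonneg (x + y); rw [hq] at this; exact_mod_cast this
  have hpq : p + q = 1 := by rw [hp, hq] at hs; exact_mod_cast hs
  rcases (by omega : p = 0 ∨ q = 0) with h | h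
  · left; exact sub_eq_zero.1 (qE_zero _ (by rw [hp, h]; simp))
  · right; exact eq_neg_of_add_eq_zero_left (qE_zero _ (by rw [hq, h]; simp))

/-- Explicit period points orthogonal to a vector of norm -1, with purely imaginary `ω 2`. -/
lemma point (x y : Fin 4 → ℚ) (hx : bK x x = -1)
    (H : ∀ ω, OmegaK ω → bKC ω (qc x) = 0 → bKC ω (qc y) = 0) (t : ℚ) (ht : 0 < t) :
    t ^ 2 * (y 1 * x 3 - y 3 * x 1) + (y 2 * x 0 - y 0 * x 2) = 0 ∧
    y 1 * x 0 - y 0 * x 1 + y 3 * x 2 - y 2 * x 3 = 0 := by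
  have hdet : x 0 * x 1 + x 2 * x 3 = -1 / 4 := by simp only [bK] at hx; linarith
  have hN : 0 < t ^ 2 * x 1 ^ 2 + x 2 ^ 2 := by
    by_contra hc
    have e1 : x 1 = 0 := by
      by_contra h1
      have : 0 < x 1 ^ 2 := by positivity
      have : 0 < t ^ 2 * x 1 ^ 2 := by positivity
      nlinarith [sq_nonneg (x 2)]
    have e2 : x 2 = 0 := by
      by_contra h1
      have : 0 < x 2 ^ 2 := by positivity
      have : 0 ≤ t ^ 2 * x 1 ^ 2 := by positivity
      nlinarith
    rw [e1, e2] at hdet; norm_num at hdet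
  set N : ℚ := t ^ 2 * x 1 ^ 2 + x 2 ^ 2 with hNdef
  -- the real and imaginary part of w
  set u : ℚ := (x 0 * x 2 - t ^ 2 * x 1 * x 3) / N with hu
  set v : ℚ := (t / 4) / N with hv
  have hvpos : 0 < v := by positivity
  have huN : u * N = x 0 * x 2 - t ^ 2 * x 1 * x 3 := by rw [hu]; field_simp
  have hvN : v * N = t / 4 := by rw [hv]; field_simp
  have r1 : -(t * v * x 1) - x 0 + u * x 2 = 0 := by
    have : (-(t * v * x 1) - x 0 + u * x 2) * N = 0 := by
      rw [hNdef] at *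
      linear_combination (-t * x 1) * hvN + x 2 * huN - (t ^ 2 * x 1) * hdet
    exact (mul_eq_zero.1 this).resolve_right hN.ne'
  have r2 : t * u * x 1 + t * x 3 + v * x 2 = 0 := by
    have : (t * u * x 1 + t * x 3 + v * x 2) * N = 0 := by
      rw [hNdef] at *
      linear_combination (t * x 1) * huN + x 2 * hvN + (t * x 2) * hdet
    exact (mul_eq_zero.1 this).resolve_right hN.ne'
  let z : ℂ := ⟨0, t⟩
  let w : ℂ := ⟨u, v⟩
  let ω : Fin 4 → ℂ := ![z * w, -1, z, w]
  have key : ∀ s : Fin 4 → ℚ, bKC ω (qc s) =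
      ⟨((2 * (-(t * v * s 1) - s 0 + u * s 2 ) : ℚ) : ℝ),
       ((2 * (t * u * s 1 + t * s 3 + v * s 2) : ℚ) : ℝ)⟩ := by
    intro s
    apply Complex.ext
    · simp [bKC, qc, ω, z, w]; ring
    · simp [bKC, qc, ω, z, w]; ring
  have hΩ : OmegaK ω := by
    refine ⟨?_, ((8 * t * v : ℚ) : ℝ), ?_, ?_⟩
    · simp [bKC, ω]; ring
    · have : 0 < 8 * t * v := by positivity
      exact_mod_cast this
    · apply Complex.ext
      · simp [bKC, ω, z, w]; ring
      · simp [bKC, ω, z, w]; ring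
  have h1 : bKC ω (qc x) = 0 := by
    rw [key, r1, r2]; apply Complex.ext <;> simp
  have h2 := H ω hΩ h1
  rw [key] at h2
  have s1 : -(t * v * y 1) - y 0 + u * y 2 = 0 := by
    have := congrArg Complex.re h2
    simp only [Complex.zero_re] at this
    have : 2 * (-(t * v * y 1) - y 0 + u * y 2) = 0 := by exact_mod_cast this
    linarith
  have s2 : t * u * y 1 + t * y 3 + v * y 2 = 0 := by
    have := congrArg Complex.im h2
    simp only [Complex.zero_im] at this
    have : 2 * (t * u * y 1 + t * y 3 + v * y 2) = 0 := by exact_mod_cast this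
    linarith
  -- multiply the complex equation by `x 1 * z + x 2`
  constructor
  · linear_combination x 2 * s1 - t * x 1 * s2 - y 2 * r1 + t * y 1 * r2
  · have : t * (y 1 * x 0 - y 0 * x 1 + y 3 * x 2 - y 2 * x 3) = 0 := by
      linear_combination x 2 * s2 + t * x 1 * s1 - t * y 1 * r1 - y 2 * r2
    exact (mul_eq_zero.1 this).resolve_left ht.ne'

lemma K_prop (x y : Fin 4 → ℚ) (hx : bK x x = -1)
    (H : ∀ ω, OmegaK ω → bKC ω (qc x) = 0 → bKC ω (qc y) = 0) :
    ∃ k : ℚ, y = k • x := by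
  obtain ⟨h1, h2⟩ := point x y hx H 1 (by norm_num)
  obtain ⟨h3, -⟩ := point x y hx H 2 (by norm_num)
  have e1 : y 1 * x 3 - y 3 * x 1 = 0 := by linarith
  have e2 : y 2 * x 0 - y 0 * x 2 = 0 := by linarith
  have hdet : x 0 * x 1 + x 2 * x 3 = -1 / 4 := by simp only [bK] at hx; linarith
  refine ⟨-2 * (x 0 * y 1 + x 1 * y 0 + x 2 * y 3 + x 3 * y 2), ?_⟩
  funext i
  fin_cases i <;> simp
  · grind
  · grind
  · grind
  · grind

lemma qc_neg (x : Fin 4 → ℚ) (ω : Fin 4 → ℂ) : bKC ω (qc (-x)) = - bKC ω (qc x) := by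
  simp [bKC, qc]; ring

lemma Imu_mem {d₁ : Fin 4 → ℚ} {d₂ : Fin 8 → ℚ} (hd₁ : isHalf4 d₁) {x : V}
    (hx : memL d₁ d₂ x) : memL d₁ d₂ (Imu x) := by
  obtain ⟨n, h4, h8⟩ := hx
  refine ⟨n, fun i => ?_, h8⟩
  obtain ⟨a, ha⟩ := h4 i
  obtain ⟨b, hb⟩ := hd₁ i
  refine ⟨-a - n * b, ?_⟩
  simp only [Imu, Pi.sub_apply, Pi.neg_apply, Pi.smul_apply, smul_eq_mul, hb] at *
  push_cast; linarith

theorem statement9 (d₁ : Fin 4 → ℚ) (d₂ : Fin 8 → ℚ)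
    (hd₁ : isHalf4 d₁) (hd₁' : ¬ isInt4 d₁)
    (hd₂ : isHalf8 d₂) (hd₂' : ¬ isInt8 d₂)
    (heven : ∃ k : ℤ, bK d₁ d₁ + bE d₂ d₂ = 2 * k)
    (hodd : ∃ m : ℤ, bK d₁ d₁ = 2 * m + 1) :
    Imu '' {x : V | memL d₁ d₂ x} = {x : V | memL d₁ d₂ x} ∧
    ∀ d δ : V, memL d₁ d₂ d → bV d d = -2 → memL d₁ d₂ δ → bV δ δ = -2 →
      bK δ.1 δ.1 < 0 →
      ({ω : Fin 4 → ℂ | OmegaK ω ∧ bKC ω (qc d.1) = 0}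
          = {ω : Fin 4 → ℂ | OmegaK ω ∧ bKC ω (qc δ.1) = 0} ↔
        (d = δ ∨ d = -δ ∨ d = Imu δ ∨ d = -Imu δ)) := by
  refine ⟨?_, ?_⟩
  · ext x
    constructor
    · rintro ⟨y, hy, rfl⟩
      exact Imu_mem hd₁ hy
    · intro hx
      exact ⟨Imu x, Imu_mem hd₁ hx, by simp [Imu]⟩
  intro d δ hd rd hδ rδ hneg
  obtain ⟨kδ, eδ⟩ := root_neg hd₁ hd₂ hodd hδ rδ hneg.le
  constructor
  · intro hset
    obtain ⟨k, hk⟩ := K_prop δ.1 d.1 kδ (fun ω hω h =>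
      ((Set.ext_iff.1 hset ω).2 ⟨hω, h⟩).2)
    have hb : bK d.1 d.1 = -k ^ 2 := by
      have : bK d.1 d.1 = k ^ 2 * bK δ.1 δ.1 := by rw [hk]; simp [bK]; ring
      rw [this, kδ]; ring
    obtain ⟨kd, ed⟩ := root_neg hd₁ hd₂ hodd hd rd (by rw [hb]; nlinarith [sq_nonneg k])
    have hk1 : k = 1 ∨ k = -1 := by
      have : (k - 1) * (k + 1) = 0 := by linarith
      rcases mul_eq_zero.1 this with h | h
      · left; linarith
      · right; linarith
    have hE := E_pm hd₂ (root_coset hd₁ hd₂ hd rd).2 (root_coset hd₁ hd₂ hδ rδ).2 ed eδ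
    rcases hk1 with rfl | rfl <;> rcases hE with hE | hE
    · left; exact Prod.ext (by simpa using hk) hE
    · right; right; right; exact Prod.ext (by simpa [Imu] using hk) (by simpa [Imu] using hE)
    · right; right; left; exact Prod.ext (by simpa [Imu] using hk) (by simpa [Imu] using hE)
    · right; left; exact Prod.ext (by simpa using hk) (by simpa using hE)
  · intro h
    have : d.1 = δ.1 ∨ d.1 = -δ.1 := by
      rcases h with rfl | rfl | rfl | rfl <;> simp [Imu]
    ext ω
    rcases this with h | h
    · rw [h]
    · simp [h, qc_neg]

end Stmt9
end
end

section
/- With Λ' as above, let v := ((1,0,0,0), 0) ∈ Λ'. (1) If d₁ is congruent modulo ℤ⁴ to one of (1/2,1/2,1/2,0), (1/2,1/2,0,0), (1/2,1/2,0,1/2), (0,1/2,1/2,1/2), then {⟨v,x⟩ : x ∈ Λ'} = ℤ, i.e. v has level 1 in Λ'. (2) If d₁ is congruent modulo ℤ⁴ to (0,0,1/2,1/2) or (1/2,0,1/2,1/2), then {⟨v,x⟩ : x ∈ Λ'} = 2ℤ, i.e. v has level 2 in Λ'. -/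
/-!
STATEMENT 13: With `Λ'` as in the context and `v := ((1,0,0,0),0) ∈ Λ'`:
(1) if `d₁` is congruent mod ℤ⁴ to one of (1/2,1/2,1/2,0), (1/2,1/2,0,0),
(1/2,1/2,0,1/2), (0,1/2,1/2,1/2), then `{⟨v,x⟩ : x ∈ Λ'} = ℤ` (level 1);
(2) if `d₁` is congruent mod ℤ⁴ to (0,0,1/2,1/2) or (1/2,0,1/2,1/2), then
`{⟨v,x⟩ : x ∈ Λ'} = 2ℤ` (level 2).
-/

noncomputable section
namespace Stmt13

/-- The bilinear form of K = U(2) ⊕ U(2) on ℚ⁴ (ℚ-bilinear extension):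
Gram matrix has blocks [[0,2],[2,0]] and [[0,2],[2,0]]. -/
def bK (x y : Fin 4 → ℚ) : ℚ :=
  2 * (x 0 * y 1 + x 1 * y 0) + 2 * (x 2 * y 3 + x 3 * y 2)

/-- The bilinear form of E = E8(2) on ℚ⁸ (ℚ-bilinear extension):
Gram matrix is −2 times the E8 Cartan matrix. -/
def bE (x y : Fin 8 → ℚ) : ℚ :=
  ∑ i : Fin 8, ∑ j : Fin 8, x i * ((-2 * CartanMatrix.E₈ i j : ℤ) : ℚ) * y j

/-- `x` lies in the lattice ℤ⁴ ⊂ ℚ⁴. -/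
def isInt4 (x : Fin 4 → ℚ) : Prop := ∀ i, ∃ n : ℤ, x i = n

/-- `x` lies in the lattice ℤ⁸ ⊂ ℚ⁸. -/
def isInt8 (x : Fin 8 → ℚ) : Prop := ∀ i, ∃ n : ℤ, x i = n

/-- `x` lies in the dual lattice (1/2)ℤ⁴ ⊂ ℚ⁴ of K. -/
def isHalf4 (x : Fin 4 → ℚ) : Prop := ∀ i, ∃ n : ℤ, x i = n / 2

/-- `x` lies in the dual lattice (1/2)ℤ⁸ ⊂ ℚ⁸ of E. -/
def isHalf8 (x : Fin 8 → ℚ) : Prop := ∀ i, ∃ n : ℤ, x i = n / 2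

/-- The ambient space ℚ⁴ ⊕ ℚ⁸ of K ⊕ E. -/
abbrev V : Type := (Fin 4 → ℚ) × (Fin 8 → ℚ)

/-- The orthogonal direct sum form of K ⊕ E on ℚ⁴ ⊕ ℚ⁸. -/
def bV (x y : V) : ℚ := bK x.1 y.1 + bE x.2 y.2

/-- Membership in the lattice Λ' = ℤ·(d₁,d₂) + (ℤ⁴ ⊕ ℤ⁸) ⊂ ℚ⁴ ⊕ ℚ⁸. -/
def memL (d₁ : Fin 4 → ℚ) (d₂ : Fin 8 → ℚ) (x : V) : Prop :=
  ∃ n : ℤ, isInt4 (x.1 - (n : ℚ) • d₁) ∧ isInt8 (x.2 - (n : ℚ) • d₂)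

/-- `v = ((1,0,0,0), 0)`. -/
def v : V := (![1, 0, 0, 0], 0)

lemma bV_v (x : V) : bV v x = 2 * x.1 1 := by
  simp [bV, bK, bE, v]

lemma level_one (d₁ : Fin 4 → ℚ) (d₂ : Fin 8 → ℚ) (m : ℤ) (hm : d₁ 1 = 1 / 2 + m) :
    {t : ℚ | ∃ x : V, memL d₁ d₂ x ∧ bV v x = t} = {t : ℚ | ∃ n : ℤ, t = n} := by
  ext t
  simp only [Set.mem_ofPred_eq, bV_v]
  constructor
  · rintro ⟨x, ⟨n, h, -⟩, rfl⟩
    obtain ⟨k, hk⟩ := h 1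
    simp only [Pi.sub_apply, Pi.smul_apply, smul_eq_mul, hm] at hk
    refine ⟨n * (1 + 2 * m) + 2 * k, ?_⟩
    push_cast
    linear_combination 2 * hk
  · rintro ⟨n, rfl⟩
    refine ⟨((n : ℚ) • d₁ + ![0, -(n * m : ℚ), 0, 0], (n : ℚ) • d₂), ⟨n, ?_, ?_⟩, ?_⟩
    · intro i
      refine ⟨(![0, -(n * m), 0, 0] : Fin 4 → ℤ) i, ?_⟩
      rw [add_sub_cancel_left]
      fin_cases i <;> simp
    · intro i
      exact ⟨0, by simp⟩
    · simp [hm]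
      ring

lemma level_two (d₁ : Fin 4 → ℚ) (d₂ : Fin 8 → ℚ) (m : ℤ) (hm : d₁ 1 = m) :
    {t : ℚ | ∃ x : V, memL d₁ d₂ x ∧ bV v x = t} = {t : ℚ | ∃ n : ℤ, t = 2 * n} := by
  ext t
  simp only [Set.mem_ofPred_eq, bV_v]
  constructor
  · rintro ⟨x, ⟨n, h, -⟩, rfl⟩
    obtain ⟨k, hk⟩ := h 1
    simp only [Pi.sub_apply, Pi.smul_apply, smul_eq_mul, hm] at hk
    refine ⟨n * m + k, ?_⟩
    push_cast
    linear_combination 2 * hk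
  · rintro ⟨n, rfl⟩
    refine ⟨(![0, (n : ℚ), 0, 0], 0), ⟨0, ?_, ?_⟩, ?_⟩
    · intro i
      refine ⟨(![0, n, 0, 0] : Fin 4 → ℤ) i, ?_⟩
      fin_cases i <;> simp
    · intro i
      exact ⟨0, by simp⟩
    · simp

theorem statement13 (d₁ : Fin 4 → ℚ) (d₂ : Fin 8 → ℚ)
    (hd₁ : isHalf4 d₁) (hd₁' : ¬ isInt4 d₁)
    (hd₂ : isHalf8 d₂) (hd₂' : ¬ isInt8 d₂)
    (heven : ∃ k : ℤ, bK d₁ d₁ + bE d₂ d₂ = 2 * k) :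
    ((isInt4 (d₁ - ![1/2, 1/2, 1/2, 0]) ∨ isInt4 (d₁ - ![1/2, 1/2, 0, 0]) ∨
        isInt4 (d₁ - ![1/2, 1/2, 0, 1/2]) ∨ isInt4 (d₁ - ![0, 1/2, 1/2, 1/2])) →
      {t : ℚ | ∃ x : V, memL d₁ d₂ x ∧ bV v x = t} = {t : ℚ | ∃ n : ℤ, t = n}) ∧
    ((isInt4 (d₁ - ![0, 0, 1/2, 1/2]) ∨ isInt4 (d₁ - ![1/2, 0, 1/2, 1/2])) →
      {t : ℚ | ∃ x : V, memL d₁ d₂ x ∧ bV v x = t} = {t : ℚ | ∃ n : ℤ, t = 2 * n}) := by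
  constructor
  · rintro (h | h | h | h) <;>
    · obtain ⟨m, hm⟩ := h 1
      refine level_one d₁ d₂ m ?_
      simp at hm
      linarith
  · rintro (h | h) <;>
    · obtain ⟨m, hm⟩ := h 1
      refine level_two d₁ d₂ m ?_
      simpa using hm

end Stmt13
end
end

section
/- In the setting above, the sublattice M admits the following explicit description: M = { (a+b)·w + 2b·w' + (0,x) : a, b ∈ (1/2)ℤ with a − b ∈ ℤ, and x ∈ ℚ⁸ with x − 2a·r ∈ ℤ⁸ }. -/
/-!
STATEMENT 14: In the level-2 setting (Cases A and B), the sublattice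
`M = {λ ∈ Λ' : ⟨λ,v⟩ = 0, ⟨λ,v'⟩ = 0}` equals
`{(a+b)w + 2b w' + (0,x) : a,b ∈ (1/2)ℤ, a − b ∈ ℤ, x − 2a·r ∈ ℤ⁸}`.
-/

noncomputable section
namespace Stmt14

/-- The bilinear form of K = U(2) ⊕ U(2) on ℚ⁴ (ℚ-bilinear extension):
Gram matrix has blocks [[0,2],[2,0]] and [[0,2],[2,0]]. -/
def bK (x y : Fin 4 → ℚ) : ℚ :=
  2 * (x 0 * y 1 + x 1 * y 0) + 2 * (x 2 * y 3 + x 3 * y 2)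

/-- The bilinear form of E = E8(2) on ℚ⁸ (ℚ-bilinear extension):
Gram matrix is −2 times the E8 Cartan matrix. -/
def bE (x y : Fin 8 → ℚ) : ℚ :=
  ∑ i : Fin 8, ∑ j : Fin 8, x i * ((-2 * CartanMatrix.E₈ i j : ℤ) : ℚ) * y j

/-- `x` lies in the lattice ℤ⁴ ⊂ ℚ⁴. -/
def isInt4 (x : Fin 4 → ℚ) : Prop := ∀ i, ∃ n : ℤ, x i = n

/-- `x` lies in the lattice ℤ⁸ ⊂ ℚ⁸. -/
def isInt8 (x : Fin 8 → ℚ) : Prop := ∀ i, ∃ n : ℤ, x i = n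

/-- `x` lies in the dual lattice (1/2)ℤ⁴ ⊂ ℚ⁴ of K. -/
def isHalf4 (x : Fin 4 → ℚ) : Prop := ∀ i, ∃ n : ℤ, x i = n / 2

/-- `x` lies in the dual lattice (1/2)ℤ⁸ ⊂ ℚ⁸ of E. -/
def isHalf8 (x : Fin 8 → ℚ) : Prop := ∀ i, ∃ n : ℤ, x i = n / 2

/-- The ambient space ℚ⁴ ⊕ ℚ⁸ of K ⊕ E. -/
abbrev V : Type := (Fin 4 → ℚ) × (Fin 8 → ℚ)

/-- The orthogonal direct sum form of K ⊕ E on ℚ⁴ ⊕ ℚ⁸. -/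
def bV (x y : V) : ℚ := bK x.1 y.1 + bE x.2 y.2

/-- Membership in the lattice Λ' = ℤ·(d₁,d₂) + (ℤ⁴ ⊕ ℤ⁸) ⊂ ℚ⁴ ⊕ ℚ⁸. -/
def memL (d₁ : Fin 4 → ℚ) (d₂ : Fin 8 → ℚ) (x : V) : Prop :=
  ∃ n : ℤ, isInt4 (x.1 - (n : ℚ) • d₁) ∧ isInt8 (x.2 - (n : ℚ) • d₂)

/-- `v = ((1,0,0,0), 0)`. -/
def v : V := (![1, 0, 0, 0], 0)

/-- `w = ((0,0,−1,0), 0)`. -/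
def w : V := (![0, 0, -1, 0], 0)

theorem statement14 (r : Fin 8 → ℚ)
    (hr : isHalf8 r) (hr' : ¬ isInt8 r) (hrr : bE r r = -1)
    (d₁ : Fin 4 → ℚ) (v' w' : V)
    (hcase :
      (d₁ = ![0, 0, 1/2, 1/2] ∧ v' = ((![0, 1, 0, 0] : Fin 4 → ℚ), 0) ∧
        w' = ((![0, 0, 1/2, -(1/2)] : Fin 4 → ℚ), 0)) ∨
      (d₁ = ![1/2, 0, 1/2, 1/2] ∧ v' = ((![0, 1, 1, 0] : Fin 4 → ℚ), 0) ∧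
        w' = ((![1/2, 0, 1/2, -(1/2)] : Fin 4 → ℚ), 0))) :
    ∀ y : V,
      (memL d₁ r y ∧ bV y v = 0 ∧ bV y v' = 0) ↔
      ∃ a b : ℚ, (∃ m : ℤ, a = m / 2) ∧ (∃ m : ℤ, b = m / 2) ∧ (∃ m : ℤ, a - b = m) ∧
        ∃ x : Fin 8 → ℚ, isInt8 (x - (2 * a) • r) ∧
          y = (a + b) • w + (2 * b) • w' + ((0 : Fin 4 → ℚ), x) := by
  intro y
  obtain ⟨z, x⟩ := y
  have hE0 : ∀ u, bE u 0 = 0 := by intro u; simp [bE]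
  have key : ∀ (p q : ℤ) (c d : ℚ), c = p → d = c + 2 * q → isInt8 (x - c • r) →
      isInt8 (x - d • r) := by
    intro p q c d _ hd h i
    obtain ⟨k, hk⟩ := h i
    obtain ⟨m, hm⟩ := hr i
    refine ⟨k - q * m, ?_⟩
    simp only [Pi.sub_apply, Pi.smul_apply, smul_eq_mul] at hk ⊢
    push_cast
    rw [← hk, hd, hm]
    ring
  constructor
  · rintro ⟨⟨n, h4, h8⟩, hv, hv'⟩
    obtain ⟨k2, hk2⟩ := h4 2
    obtain ⟨k3, hk3⟩ := h4 3
    have hd2 : d₁ 2 = 1/2 := by rcases hcase with ⟨h, -, -⟩ | ⟨h, -, -⟩ <;> simp [h]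
    have hd3 : d₁ 3 = 1/2 := by rcases hcase with ⟨h, -, -⟩ | ⟨h, -, -⟩ <;> simp [h]
    simp only [Pi.sub_apply, Pi.smul_apply, smul_eq_mul, hd2, hd3] at hk2 hk3
    refine ⟨-z 2, -z 3, ⟨-n - 2 * k2, ?_⟩, ⟨-n - 2 * k3, ?_⟩, ⟨k3 - k2, ?_⟩, x, ?_, ?_⟩
    · push_cast; linarith
    · push_cast; linarith
    · push_cast; linarith
    · refine key n (-n - k2) n _ rfl ?_ h8
      push_cast; linarith
    · rcases hcase with ⟨-, rfl, rfl⟩ | ⟨-, rfl, rfl⟩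
      all_goals
        simp [bV, bK, v, hE0] at hv hv'
        refine Prod.ext ?_ ?_
        · funext i
          fin_cases i <;> simp [w] <;> linarith
        · simp [w]
  · rintro ⟨a, b, ⟨m, hm⟩, ⟨l, hl⟩, ⟨t, ht⟩, x', hx, hy⟩
    have hx' : x = x' := by
      have := congrArg Prod.snd hy
      rcases hcase with ⟨-, rfl, rfl⟩ | ⟨-, rfl, rfl⟩ <;> simpa [w] using this
    subst hx'
    have hz := congrArg Prod.fst hy
    have h0 := congrFun hz 0
    have h1 := congrFun hz 1
    have h2 := congrFun hz 2
    have h3 := congrFun hz 3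
    have hma : (2 * a) = m := by rw [hm]; ring
    rcases hcase with ⟨rfl, rfl, rfl⟩ | ⟨rfl, rfl, rfl⟩
    · simp [w] at h0 h1 h2 h3
      refine ⟨⟨m, ?_, by rw [← hma]; exact hx⟩, ?_, ?_⟩
      · intro i
        fin_cases i
        · exact ⟨0, by simp [h0]⟩
        · exact ⟨0, by simp [h1]⟩
        · exact ⟨-m, by simp [h2]; linarith⟩
        · exact ⟨t - m, by simp [h3]; linarith⟩
      · simp [bV, bK, v, hE0, h1]
      · simp [bV, bK, hE0, h0]
    · simp [w] at h0 h1 h2 h3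
      refine ⟨⟨m, ?_, by rw [← hma]; exact hx⟩, ?_, ?_⟩
      · intro i
        fin_cases i
        · exact ⟨-t, by simp [h0]; linarith⟩
        · exact ⟨0, by simp [h1]⟩
        · exact ⟨-m, by simp [h2]; linarith⟩
        · exact ⟨t - m, by simp [h3]; linarith⟩
      · simp [bV, bK, v, hE0, h1]
      · simp [bV, bK, hE0, h0, h3]; try ring

end Stmt14
end
end

section
/- In the setting above, suppose λ ∈ Π⁺ and there exists ω ∈ Ω_K with ⟨ω, λ_K⟩ = 0, where λ_K ∈ ℚ⁴ is the K-component of λ and the pairing is via the ℂ-bilinear extension of the form of K. Then λ = w' − (0,r) or λ = −w' − (0,r); that is, the K-component of λ equals ±w' and the E-component of λ equals −r. -/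
/-!
STATEMENT 15: In the level-2 setting (Cases A and B), if `λ ∈ Π⁺` and there
is `ω ∈ Ω_K` with `⟨ω, λ_K⟩ = 0`, then `λ = w' − (0,r)` or `λ = −w' − (0,r)`.
-/

noncomputable section
namespace Stmt15

/-- The bilinear form of K = U(2) ⊕ U(2) on ℚ⁴ (ℚ-bilinear extension):
Gram matrix has blocks [[0,2],[2,0]] and [[0,2],[2,0]]. -/
def bK (x y : Fin 4 → ℚ) : ℚ :=
  2 * (x 0 * y 1 + x 1 * y 0) + 2 * (x 2 * y 3 + x 3 * y 2)

/-- The bilinear form of E = E8(2) on ℚ⁸ (ℚ-bilinear extension):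
Gram matrix is −2 times the E8 Cartan matrix. -/
def bE (x y : Fin 8 → ℚ) : ℚ :=
  ∑ i : Fin 8, ∑ j : Fin 8, x i * ((-2 * CartanMatrix.E₈ i j : ℤ) : ℚ) * y j

/-- `x` lies in the lattice ℤ⁴ ⊂ ℚ⁴. -/
def isInt4 (x : Fin 4 → ℚ) : Prop := ∀ i, ∃ n : ℤ, x i = n

/-- `x` lies in the lattice ℤ⁸ ⊂ ℚ⁸. -/
def isInt8 (x : Fin 8 → ℚ) : Prop := ∀ i, ∃ n : ℤ, x i = n

/-- `x` lies in the dual lattice (1/2)ℤ⁴ ⊂ ℚ⁴ of K. -/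
def isHalf4 (x : Fin 4 → ℚ) : Prop := ∀ i, ∃ n : ℤ, x i = n / 2

/-- `x` lies in the dual lattice (1/2)ℤ⁸ ⊂ ℚ⁸ of E. -/
def isHalf8 (x : Fin 8 → ℚ) : Prop := ∀ i, ∃ n : ℤ, x i = n / 2

/-- The ambient space ℚ⁴ ⊕ ℚ⁸ of K ⊕ E. -/
abbrev V : Type := (Fin 4 → ℚ) × (Fin 8 → ℚ)

/-- The orthogonal direct sum form of K ⊕ E on ℚ⁴ ⊕ ℚ⁸. -/
def bV (x y : V) : ℚ := bK x.1 y.1 + bE x.2 y.2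

/-- Membership in the lattice Λ' = ℤ·(d₁,d₂) + (ℤ⁴ ⊕ ℤ⁸) ⊂ ℚ⁴ ⊕ ℚ⁸. -/
def memL (d₁ : Fin 4 → ℚ) (d₂ : Fin 8 → ℚ) (x : V) : Prop :=
  ∃ n : ℤ, isInt4 (x.1 - (n : ℚ) • d₁) ∧ isInt8 (x.2 - (n : ℚ) • d₂)

/-- The ℂ-bilinear extension of the form of K to ℂ⁴. -/
def bKC (x y : Fin 4 → ℂ) : ℂ :=
  2 * (x 0 * y 1 + x 1 * y 0) + 2 * (x 2 * y 3 + x 3 * y 2)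

/-- The period domain Ω_K: ω ∈ ℂ⁴ with ⟨ω,ω⟩ = 0 and ⟨ω,ω̄⟩ a positive real. -/
def OmegaK (ω : Fin 4 → ℂ) : Prop :=
  bKC ω ω = 0 ∧ ∃ t : ℝ, 0 < t ∧ bKC ω (fun i => (starRingEnd ℂ) (ω i)) = (t : ℂ)

/-- Coercion ℚ⁴ → ℂ⁴. -/
def qc (x : Fin 4 → ℚ) : Fin 4 → ℂ := fun i => ((x i : ℚ) : ℂ)

/-- `v = ((1,0,0,0), 0)`. -/
def v : V := (![1, 0, 0, 0], 0)

/-- `w = ((0,0,−1,0), 0)`. -/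
def w : V := (![0, 0, -1, 0], 0)

/-- Half of the E8 quadratic form. -/
def Q8 (x : Fin 8 → ℚ) : ℚ :=
  x 0 ^ 2 + x 1 ^ 2 + x 2 ^ 2 + x 3 ^ 2 + x 4 ^ 2 + x 5 ^ 2 + x 6 ^ 2 + x 7 ^ 2
    - x 0 * x 2 - x 2 * x 3 - x 1 * x 3 - x 3 * x 4 - x 4 * x 5 - x 5 * x 6 - x 6 * x 7

theorem bE_self (x : Fin 8 → ℚ) : bE x x = -4 * Q8 x := by
  simp [bE, Q8, CartanMatrix.E₈, Fin.sum_univ_eight]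
  ring

theorem bE_add (x y : Fin 8 → ℚ) :
    bE (x + y) (x + y) = bE x x + 2 * bE x y + bE y y := by
  simp [bE, CartanMatrix.E₈, Fin.sum_univ_eight]
  ring

theorem Q8_sos (x : Fin 8 → ℚ) : Q8 x = (x 0 - x 2 / 2) ^ 2 + (x 1 - x 3 / 2) ^ 2
    + (x 7 - x 6 / 2) ^ 2 + 3 / 4 * (x 2 - 2 / 3 * x 3) ^ 2 + 3 / 4 * (x 6 - 2 / 3 * x 5) ^ 2
    + 2 / 3 * (x 5 - 3 / 4 * x 4) ^ 2 + 5 / 8 * (x 4 - 4 / 5 * x 3) ^ 2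
    + 1 / 60 * x 3 ^ 2 := by
  unfold Q8; ring

theorem Q8_nonneg (x : Fin 8 → ℚ) : 0 ≤ Q8 x := by
  rw [Q8_sos]; positivity

theorem Q8_eq_zero (x : Fin 8 → ℚ) (h : Q8 x = 0) : x = 0 := by
  rw [Q8_sos] at h
  have s1 := sq_nonneg (x 0 - x 2 / 2)
  have s2 := sq_nonneg (x 1 - x 3 / 2)
  have s3 := sq_nonneg (x 7 - x 6 / 2)
  have s4 := sq_nonneg (x 2 - 2 / 3 * x 3)
  have s5 := sq_nonneg (x 6 - 2 / 3 * x 5)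
  have s6 := sq_nonneg (x 5 - 3 / 4 * x 4)
  have s7 := sq_nonneg (x 4 - 4 / 5 * x 3)
  have s8 := sq_nonneg (x 3)
  have t1 : x 0 - x 2 / 2 = 0 := pow_eq_zero_iff (two_ne_zero) |>.1 (by linarith)
  have t2 : x 1 - x 3 / 2 = 0 := pow_eq_zero_iff (two_ne_zero) |>.1 (by linarith)
  have t3 : x 7 - x 6 / 2 = 0 := pow_eq_zero_iff (two_ne_zero) |>.1 (by linarith)
  have t4 : x 2 - 2 / 3 * x 3 = 0 := pow_eq_zero_iff (two_ne_zero) |>.1 (by linarith)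
  have t5 : x 6 - 2 / 3 * x 5 = 0 := pow_eq_zero_iff (two_ne_zero) |>.1 (by linarith)
  have t6 : x 5 - 3 / 4 * x 4 = 0 := pow_eq_zero_iff (two_ne_zero) |>.1 (by linarith)
  have t7 : x 4 - 4 / 5 * x 3 = 0 := pow_eq_zero_iff (two_ne_zero) |>.1 (by linarith)
  have t8 : x 3 = 0 := pow_eq_zero_iff (two_ne_zero) |>.1 (by linarith)
  ext i
  fin_cases i <;> simp <;> linarith

theorem Q8_int (x : Fin 8 → ℚ) (h : isInt8 x) : ∃ n : ℤ, Q8 x = n := by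
  choose m hm using h
  refine ⟨m 0 ^ 2 + m 1 ^ 2 + m 2 ^ 2 + m 3 ^ 2 + m 4 ^ 2 + m 5 ^ 2 + m 6 ^ 2 + m 7 ^ 2
    - m 0 * m 2 - m 2 * m 3 - m 1 * m 3 - m 3 * m 4 - m 4 * m 5 - m 5 * m 6 - m 6 * m 7, ?_⟩
  unfold Q8
  simp only [hm]
  push_cast
  ring

/-- An integral vector of E8(2) of norm greater than -4 is zero. -/
theorem int_zero (x : Fin 8 → ℚ) (h : isInt8 x) (hx : -4 < bE x x) : x = 0 := by
  obtain ⟨n, hn⟩ := Q8_int x h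
  have h0 := Q8_nonneg x
  rw [bE_self] at hx
  apply Q8_eq_zero
  rw [hn] at hx h0 ⊢
  have h1 : n < 1 := by
    have : (n : ℚ) < 1 := by linarith
    exact_mod_cast this
  have h2 : 0 ≤ n := by exact_mod_cast h0
  have : n = 0 := by omega
  simp [this]

/-- A nonzero half-integral vector has norm at most -1. -/
theorem half_le (x : Fin 8 → ℚ) (h : isHalf8 x) (hx : x ≠ 0) : bE x x ≤ -1 := by
  have hi : isInt8 ((2 : ℚ) • x) := by
    intro i
    obtain ⟨n, hn⟩ := h i
    exact ⟨n, by simp [hn]; ring⟩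
  by_contra hc
  have : (2 : ℚ) • x = 0 := by
    apply int_zero _ hi
    have : bE ((2 : ℚ) • x) ((2 : ℚ) • x) = 4 * bE x x := by
      rw [bE_self, bE_self]; simp [Q8]; ring
    rw [this]; linarith
  exact hx (by simpa using this)

theorem cplx_bound (p q z : ℂ) (t : ℝ) (ht : 0 ≤ t) (h : p * q = t * z ^ 2) :
    (p * (starRingEnd ℂ) q).re ≤ t * Complex.normSq z := by
  refine (Complex.re_le_norm _).trans (le_of_eq ?_)
  have := congrArg norm h
  rw [norm_mul, norm_mul, norm_pow, Complex.norm_real, Real.norm_of_nonneg ht] at this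
  rw [norm_mul, Complex.norm_conj, this, Complex.normSq_eq_norm_sq]

theorem omega_neg (ω : Fin 4 → ℂ) (hω : OmegaK ω) (a b c : ℝ) (hc : b = 0 → c = 0)
    (hab : 0 ≤ a * b) (h : a * ω 3 + b * ω 2 + c * ω 1 = 0) : a = 0 ∧ b = 0 := by
  obtain ⟨h0, t, ht, hh⟩ := hω
  by_contra hne
  have h0' : ω 0 * ω 1 + ω 2 * ω 3 = 0 := by
    unfold bKC at h0
    linear_combination h0 / 4
  have hh' := congrArg Complex.re hh
  by_cases hb : b = 0
  · have ha : a ≠ 0 := fun ha => hne ⟨ha, hb⟩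
    have h3 : ω 3 = 0 := by simpa [hb, hc hb, ha] using h
    rw [h3, mul_zero, add_zero] at h0'
    rcases mul_eq_zero.1 h0' with h1 | h1 <;> simp [bKC, h1, h3] at hh' <;> linarith
  · have hbC : (b : ℂ) ≠ 0 := by exact_mod_cast hb
    have h2 : ω 2 = -(a / b : ℝ) * ω 3 - (c / b : ℝ) * ω 1 := by
      push_cast
      field_simp
      linear_combination h
    have hs : 0 ≤ a / b := by
      have : a / b = a * b / b ^ 2 := by field_simp
      rw [this]; positivity
    generalize a / b = s at *
    generalize c / b = u at *
    have key := cplx_bound (ω 0 - u * ω 3) (ω 1) (ω 3) s hs (by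
      rw [h2] at h0'; linear_combination h0')
    simp [bKC, h2, Complex.normSq_apply] at hh' key
    nlinarith

theorem main_aux (r e : Fin 8 → ℚ) (a b : ℚ) (n : ℤ)
    (hr : isHalf8 r) (hr' : ¬ isInt8 r) (hrr : bE r r = -1)
    (ha : ∃ m : ℤ, a - n * (1 / 2) = m) (hb : ∃ m : ℤ, b - n * (1 / 2) = m)
    (he : isInt8 (e - (n : ℚ) • r)) (hpos : 0 < -(a + b) + bE e r)
    (hnorm : -2 ≤ 4 * (a * b) + bE e e)
    (hneg : 0 ≤ a * b → a = 0 ∧ b = 0) :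
    e = -r ∧ (a = 1 / 2 ∧ b = -(1 / 2) ∨ a = -(1 / 2) ∧ b = 1 / 2) := by
  have hab : a * b ≤ 0 := by
    by_contra hc
    push Not at hc
    have := (hneg hc.le).1
    simp [this] at hc
  have hEe : bE e e ≤ 0 := by
    rw [bE_self]; have := Q8_nonneg e; linarith
  obtain ⟨m, hm⟩ := ha
  obtain ⟨l, hl⟩ := hb
  choose k hk using hr
  choose z hz using he
  rcases Int.even_or_odd' n with ⟨j, hj | hj⟩
  · exfalso
    subst hj
    have e0 : e = 0 := by
      apply int_zero
      · intro i
        refine ⟨z i + j * k i, ?_⟩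
        have := hz i
        simp [hk i] at this
        push_cast
        linarith
      · linarith
    have ha' : a = ((m + j : ℤ) : ℚ) := by push_cast at hm ⊢; linarith
    have hb' : b = ((l + j : ℤ) : ℚ) := by push_cast at hl ⊢; linarith
    have hE : ∀ y, bE 0 y = 0 := by intro y; simp [bE]
    rw [e0, hE] at hnorm hpos
    have : 0 ≤ a * b := by
      rw [ha', hb'] at hnorm ⊢
      have h1 : (-1 : ℚ) < (((m + j) * (l + j) : ℤ) : ℚ) := by
        rw [Int.cast_mul]; linarith
      have h2 : (-1 : ℤ) < (m + j) * (l + j) := by exact_mod_cast h1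
      have h3 : (0 : ℤ) ≤ (m + j) * (l + j) := by omega
      exact_mod_cast h3
    obtain ⟨h1, h2⟩ := hneg this
    rw [h1, h2] at hpos
    simp at hpos
  · subst hj
    have he' : isHalf8 e := by
      intro i
      refine ⟨2 * z i + (2 * j + 1) * k i, ?_⟩
      have := hz i
      simp [hk i] at this
      push_cast
      linarith
    have her : isInt8 (e + r) := by
      intro i
      refine ⟨z i + (j + 1) * k i, ?_⟩
      have := hz i
      simp [hk i] at this ⊢
      linarith
    have hne : e ≠ 0 := by
      rintro rfl
      exact hr' (by simpa using her)
    have hE1 := half_le e he' hne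
    have ha' : 2 * a = ((2 * (m + j) + 1 : ℤ) : ℚ) := by push_cast at hm ⊢; linarith
    have hb' : 2 * b = ((2 * (l + j) + 1 : ℤ) : ℚ) := by push_cast at hl ⊢; linarith
    generalize m + j = A at *
    generalize l + j = B at *
    have h4 : 4 * (a * b) = (((2 * A + 1) * (2 * B + 1) : ℤ) : ℚ) := by
      rw [Int.cast_mul, ← ha', ← hb']; ring
    have h5 : (-1 : ℤ) ≤ (2 * A + 1) * (2 * B + 1) := by
      have : (-1 : ℚ) ≤ (((2 * A + 1) * (2 * B + 1) : ℤ) : ℚ) := by rw [← h4]; linarith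
      exact_mod_cast this
    have h6 : (2 * A + 1) * (2 * B + 1) ≤ 0 := by
      have : (((2 * A + 1) * (2 * B + 1) : ℤ) : ℚ) ≤ 0 := by rw [← h4]; linarith
      exact_mod_cast this
    have h7 : (2 * A + 1) * (2 * B + 1) = -1 := by
      have : (2 * A + 1) * (2 * B + 1) = 2 * (2 * A * B + A + B) + 1 := by ring
      omega
    rw [h7] at h4
    push_cast at h4
    have hcases : 2 * A + 1 = 1 ∧ 2 * B + 1 = -1 ∨ 2 * A + 1 = -1 ∧ 2 * B + 1 = 1 :=
      Int.mul_eq_neg_one_iff_eq_one_or_neg_one.1 h7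
    have hout : a = 1 / 2 ∧ b = -(1 / 2) ∨ a = -(1 / 2) ∧ b = 1 / 2 := by
      rcases hcases with ⟨h1, h2⟩ | ⟨h1, h2⟩ <;> rw [h1] at ha' <;> rw [h2] at hb' <;>
        push_cast at ha' hb'
      · left; constructor <;> linarith
      · right; constructor <;> linarith
    have hsum : a + b = 0 := by
      rcases hout with ⟨h1, h2⟩ | ⟨h1, h2⟩ <;> rw [h1, h2] <;> norm_num
    refine ⟨?_, hout⟩
    have : e + r = 0 := by
      apply int_zero _ her
      rw [bE_add]
      linarith
    exact eq_neg_of_add_eq_zero_left this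

theorem statement15 (r : Fin 8 → ℚ)
    (hr : isHalf8 r) (hr' : ¬ isInt8 r) (hrr : bE r r = -1)
    (d₁ : Fin 4 → ℚ) (v' w' : V)
    (hcase :
      (d₁ = ![0, 0, 1/2, 1/2] ∧ v' = ((![0, 1, 0, 0] : Fin 4 → ℚ), 0) ∧
        w' = ((![0, 0, 1/2, -(1/2)] : Fin 4 → ℚ), 0)) ∨
      (d₁ = ![1/2, 0, 1/2, 1/2] ∧ v' = ((![0, 1, 1, 0] : Fin 4 → ℚ), 0) ∧
        w' = ((![1/2, 0, 1/2, -(1/2)] : Fin 4 → ℚ), 0)))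
    (lam : V)
    (hmem : memL d₁ r lam) (hv : bV lam v = 0) (hv' : bV lam v' = 0)
    (hpos : 0 < bV lam (w + w' + ((0 : Fin 4 → ℚ), r)))
    (hnorm : -2 ≤ bV lam lam)
    (hω : ∃ ω : Fin 4 → ℂ, OmegaK ω ∧ bKC ω (qc lam.1) = 0) :
    lam = w' - ((0 : Fin 4 → ℚ), r) ∨ lam = -w' - ((0 : Fin 4 → ℚ), r) := by
  obtain ⟨k, e⟩ := lam
  obtain ⟨n, h4, h8⟩ := hmem
  obtain ⟨ω, hω, hk⟩ := hω
  have hE0 : ∀ y, bE y 0 = 0 := by intro y; simp [bE]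
  have hneg : ∀ (hc : k 3 = 0 → k 0 = 0), k 1 = 0 → 0 ≤ k 2 * k 3 → k 2 = 0 ∧ k 3 = 0 := by
    intro hc h1 hab
    have := omega_neg ω hω (k 2) (k 3) (k 0) (by exact_mod_cast hc) (by exact_mod_cast hab) (by
      simp [bKC, qc, h1] at hk
      push_cast
      linear_combination hk / 2)
    exact_mod_cast this
  have k1 : k 1 = 0 := by simpa [bV, bK, v, hE0] using hv
  have ha := h4 2
  have hb := h4 3
  rcases hcase with ⟨rfl, rfl, rfl⟩ | ⟨rfl, rfl, rfl⟩
  · have k0 : k 0 = 0 := by simpa [bV, bK, hE0] using hv'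
    simp [bV, bK, w] at hpos hnorm ha hb
    obtain ⟨he, hab⟩ := main_aux r e (k 2) (k 3) n hr hr' hrr (by simpa using ha)
      (by simpa using hb) h8 (by linarith) (by simp [k0, k1] at hnorm; linarith)
      (hneg (fun _ => k0) k1)
    rcases hab with ⟨h2, h3⟩ | ⟨h2, h3⟩
    · left
      ext i
      · fin_cases i <;> simp [k0, k1, h2, h3]
      · simp [he]
    · right
      ext i
      · fin_cases i <;> simp [k0, k1, h2, h3]
      · simp [he]
  · have k0 : k 0 = - k 3 := by
      simp [bV, bK, hE0] at hv'
      linarith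
    simp [bV, bK, w] at hpos hnorm ha hb
    obtain ⟨he, hab⟩ := main_aux r e (k 2) (k 3) n hr hr' hrr (by simpa using ha)
      (by simpa using hb) h8 (by linarith) (by simp [k1] at hnorm; linarith)
      (hneg (fun h => by rw [k0, h, neg_zero]) k1)
    rcases hab with ⟨h2, h3⟩ | ⟨h2, h3⟩
    · left
      ext i
      · fin_cases i <;> simp [k0, k1, h2, h3]
      · simp [he]
    · right
      ext i
      · fin_cases i <;> simp [k0, k1, h2, h3]
      · simp [he]

end Stmt15
end
end

section
/- In the setting above, suppose λ ∈ Π⁺ and there is no ω ∈ Ω_K with ⟨ω, λ_K⟩ = 0, where λ_K ∈ ℚ⁴ is the K-component of λ. Write λ_K = (c, 0, a, b) with a, b, c ∈ (1/2)ℤ (the second coordinate of λ_K vanishes automatically because ⟨λ,v⟩ = 0). Then a ≤ 0, b ≤ 0, and (a,b) ≠ (0,0). -/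
/-!
STATEMENT 16: In the level-2 setting (Cases A and B), if `λ ∈ Π⁺` and there
is no `ω ∈ Ω_K` with `⟨ω, λ_K⟩ = 0`, then writing `λ_K = (c, 0, a, b)` (the
second coordinate vanishes automatically since `⟨λ,v⟩ = 0`), one has
`a ≤ 0`, `b ≤ 0` and `(a,b) ≠ (0,0)`.
-/

noncomputable section
namespace Stmt16

/-- The bilinear form of K = U(2) ⊕ U(2) on ℚ⁴ (ℚ-bilinear extension):
Gram matrix has blocks [[0,2],[2,0]] and [[0,2],[2,0]]. -/
def bK (x y : Fin 4 → ℚ) : ℚ :=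
  2 * (x 0 * y 1 + x 1 * y 0) + 2 * (x 2 * y 3 + x 3 * y 2)

/-- The bilinear form of E = E8(2) on ℚ⁸ (ℚ-bilinear extension):
Gram matrix is −2 times the E8 Cartan matrix. -/
def bE (x y : Fin 8 → ℚ) : ℚ :=
  ∑ i : Fin 8, ∑ j : Fin 8, x i * ((-2 * CartanMatrix.E₈ i j : ℤ) : ℚ) * y j

/-- `x` lies in the lattice ℤ⁴ ⊂ ℚ⁴. -/
def isInt4 (x : Fin 4 → ℚ) : Prop := ∀ i, ∃ n : ℤ, x i = n

/-- `x` lies in the lattice ℤ⁸ ⊂ ℚ⁸. -/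
def isInt8 (x : Fin 8 → ℚ) : Prop := ∀ i, ∃ n : ℤ, x i = n

/-- `x` lies in the dual lattice (1/2)ℤ⁴ ⊂ ℚ⁴ of K. -/
def isHalf4 (x : Fin 4 → ℚ) : Prop := ∀ i, ∃ n : ℤ, x i = n / 2

/-- `x` lies in the dual lattice (1/2)ℤ⁸ ⊂ ℚ⁸ of E. -/
def isHalf8 (x : Fin 8 → ℚ) : Prop := ∀ i, ∃ n : ℤ, x i = n / 2

/-- The ambient space ℚ⁴ ⊕ ℚ⁸ of K ⊕ E. -/
abbrev V : Type := (Fin 4 → ℚ) × (Fin 8 → ℚ)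

/-- The orthogonal direct sum form of K ⊕ E on ℚ⁴ ⊕ ℚ⁸. -/
def bV (x y : V) : ℚ := bK x.1 y.1 + bE x.2 y.2

/-- Membership in the lattice Λ' = ℤ·(d₁,d₂) + (ℤ⁴ ⊕ ℤ⁸) ⊂ ℚ⁴ ⊕ ℚ⁸. -/
def memL (d₁ : Fin 4 → ℚ) (d₂ : Fin 8 → ℚ) (x : V) : Prop :=
  ∃ n : ℤ, isInt4 (x.1 - (n : ℚ) • d₁) ∧ isInt8 (x.2 - (n : ℚ) • d₂)

/-- The ℂ-bilinear extension of the form of K to ℂ⁴. -/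
def bKC (x y : Fin 4 → ℂ) : ℂ :=
  2 * (x 0 * y 1 + x 1 * y 0) + 2 * (x 2 * y 3 + x 3 * y 2)

/-- The period domain Ω_K: ω ∈ ℂ⁴ with ⟨ω,ω⟩ = 0 and ⟨ω,ω̄⟩ a positive real. -/
def OmegaK (ω : Fin 4 → ℂ) : Prop :=
  bKC ω ω = 0 ∧ ∃ t : ℝ, 0 < t ∧ bKC ω (fun i => (starRingEnd ℂ) (ω i)) = (t : ℂ)

/-- Coercion ℚ⁴ → ℂ⁴. -/
def qc (x : Fin 4 → ℚ) : Fin 4 → ℂ := fun i => ((x i : ℚ) : ℂ)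

/-- `v = ((1,0,0,0), 0)`. -/
def v : V := (![1, 0, 0, 0], 0)

/-- `w = ((0,0,−1,0), 0)`. -/
def w : V := (![0, 0, -1, 0], 0)

/-- The form of `E` is symmetric bilinear; explicit formula. -/
lemma bE_eq (x y : Fin 8 → ℚ) : bE x y =
    -4 * (x 0 * y 0 + x 1 * y 1 + x 2 * y 2 + x 3 * y 3 + x 4 * y 4 + x 5 * y 5 + x 6 * y 6
      + x 7 * y 7)
    + 2 * (x 0 * y 2 + x 2 * y 0 + x 2 * y 3 + x 3 * y 2 + x 1 * y 3 + x 3 * y 1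
      + x 3 * y 4 + x 4 * y 3 + x 4 * y 5 + x 5 * y 4 + x 5 * y 6 + x 6 * y 5
      + x 6 * y 7 + x 7 * y 6) := by
  simp [bE, Fin.sum_univ_eight, CartanMatrix.E₈]
  ring

lemma bE_nonpos (x : Fin 8 → ℚ) : bE x x ≤ 0 := by
  rw [bE_eq]
  nlinarith [sq_nonneg (x 0 - x 2 / 2), sq_nonneg (x 2 - 2 / 3 * x 3), sq_nonneg (x 1 - x 3 / 2),
    sq_nonneg (x 7 - x 6 / 2), sq_nonneg (x 6 - 2 / 3 * x 5), sq_nonneg (x 5 - 3 / 4 * x 4),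
    sq_nonneg (x 4 - 4 / 5 * x 3), sq_nonneg (x 3)]

lemma bE_cs (e r : Fin 8 → ℚ) (hr : bE r r = -1) : (bE e r) ^ 2 ≤ - bE e e := by
  have h := bE_nonpos (e + (bE e r) • r)
  have key : ∀ t : ℚ, bE (e + t • r) (e + t • r) = bE e e + 2 * t * bE e r + t ^ 2 * bE r r := by
    intro t
    simp only [bE_eq, Pi.add_apply, Pi.smul_apply, smul_eq_mul]
    ring
  rw [key, hr] at h
  nlinarith

lemma bE_int (e r : Fin 8 → ℚ) (hr : isHalf8 r) (hrr : bE r r = -1) (n : ℤ)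
    (h : isInt8 (e - (n : ℚ) • r)) : ∃ m : ℤ, bE e r = m := by
  have e1 : bE e r = bE (e - (n : ℚ) • r) r + n * bE r r := by
    simp only [bE_eq, Pi.sub_apply, Pi.smul_apply, smul_eq_mul]
    ring
  choose z hz using h
  choose s hs using hr
  rw [e1, hrr]
  refine ⟨(-2 * (z 0 * s 0 + z 1 * s 1 + z 2 * s 2 + z 3 * s 3 + z 4 * s 4 + z 5 * s 5 + z 6 * s 6
      + z 7 * s 7)
    + (z 0 * s 2 + z 2 * s 0 + z 2 * s 3 + z 3 * s 2 + z 1 * s 3 + z 3 * s 1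
      + z 3 * s 4 + z 4 * s 3 + z 4 * s 5 + z 5 * s 4 + z 5 * s 6 + z 6 * s 5
      + z 6 * s 7 + z 7 * s 6)) - n, ?_⟩
  rw [bE_eq]
  simp only [hz, hs]
  push_cast
  ring

lemma omega_zero (x : Fin 4 → ℚ) (h : ∀ i, x i = 0) :
    ∃ ω : Fin 4 → ℂ, OmegaK ω ∧ bKC ω (qc x) = 0 := by
  refine ⟨![1, 1, Complex.I, Complex.I], ⟨?_, 8, by norm_num, ?_⟩, ?_⟩
  · simp [bKC]
    norm_num
  · simp [bKC]
    norm_num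
  · simp [bKC, qc, h]

lemma omega_neg (x : Fin 4 → ℚ) (h1 : x 1 = 0) (h : x 2 * x 3 < 0) :
    ∃ ω : Fin 4 → ℂ, OmegaK ω ∧ bKC ω (qc x) = 0 := by
  have ha : x 2 ≠ 0 := by
    rintro h0
    simp [h0] at h
  obtain ⟨k, hk⟩ : ∃ k : ℚ, x 3 = -(k * x 2) := ⟨-(x 3 / x 2), by field_simp⟩
  obtain ⟨m, hm⟩ : ∃ m : ℚ, x 0 = m * x 2 := ⟨x 0 / x 2, by field_simp⟩
  have hk0 : 0 < k := by
    rw [hk] at h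
    have : 0 < x 2 ^ 2 := by positivity
    by_contra hc
    nlinarith
  have hI := Complex.I_sq
  refine ⟨![(k : ℂ) + m * Complex.I, 1, Complex.I, k * Complex.I - m],
    ⟨?_, 8 * (k : ℝ), by positivity, ?_⟩, ?_⟩
  · simp [bKC]
    linear_combination 4 * (k : ℂ) * hI
  · simp [bKC]
    linear_combination (-4) * (k : ℂ) * hI
  · simp [bKC, qc, h1, hk, hm]
    ring

theorem statement16 (r : Fin 8 → ℚ)
    (hr : isHalf8 r) (hr' : ¬ isInt8 r) (hrr : bE r r = -1)
    (d₁ : Fin 4 → ℚ) (v' w' : V)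
    (hcase :
      (d₁ = ![0, 0, 1/2, 1/2] ∧ v' = ((![0, 1, 0, 0] : Fin 4 → ℚ), 0) ∧
        w' = ((![0, 0, 1/2, -(1/2)] : Fin 4 → ℚ), 0)) ∨
      (d₁ = ![1/2, 0, 1/2, 1/2] ∧ v' = ((![0, 1, 1, 0] : Fin 4 → ℚ), 0) ∧
        w' = ((![1/2, 0, 1/2, -(1/2)] : Fin 4 → ℚ), 0)))
    (lam : V)
    (hmem : memL d₁ r lam) (hv : bV lam v = 0) (hv' : bV lam v' = 0)
    (hpos : 0 < bV lam (w + w' + ((0 : Fin 4 → ℚ), r)))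
    (hnorm : -2 ≤ bV lam lam)
    (hω : ¬ ∃ ω : Fin 4 → ℂ, OmegaK ω ∧ bKC ω (qc lam.1) = 0) :
    lam.1 1 = 0 ∧ lam.1 2 ≤ 0 ∧ lam.1 3 ≤ 0 ∧ ¬(lam.1 2 = 0 ∧ lam.1 3 = 0) := by
  obtain ⟨n, h4, h8⟩ := hmem
  obtain ⟨m, hm⟩ := bE_int lam.2 r hr hrr n h8
  have hcs := bE_cs lam.2 r hrr
  have hE0 : bE lam.2 0 = 0 := by simp [bE]
  have h1 : lam.1 1 = 0 := by
    simpa [bV, v, hE0, bK] using hv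
  have hnn : 0 ≤ lam.1 2 * lam.1 3 := by
    by_contra hc
    exact hω (omega_neg lam.1 h1 (not_le.mp hc))
  have hpos' : lam.1 2 + lam.1 3 < bE lam.2 r := by
    rcases hcase with ⟨_, _, rfl⟩ | ⟨_, _, rfl⟩ <;>
    · simp [bV, w, bK, h1] at hpos
      linarith
  have h0 : lam.1 2 = 0 → lam.1 3 = 0 → False := by
    intro h2 h3
    refine hω (omega_zero lam.1 ?_)
    have hc : lam.1 0 = 0 := by
      rcases hcase with ⟨_, rfl, _⟩ | ⟨_, rfl, _⟩ <;>
      simpa [bV, bK, h1, h2, h3, hE0] using hv'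
    intro i
    fin_cases i <;> assumption
  have hab : ∃ q : ℤ, lam.1 2 + lam.1 3 = q := by
    obtain ⟨p2, hp2⟩ := h4 2
    obtain ⟨p3, hp3⟩ := h4 3
    refine ⟨p2 + p3 + n, ?_⟩
    rcases hcase with ⟨rfl, _, _⟩ | ⟨rfl, _, _⟩ <;>
    · simp at hp2 hp3
      push_cast
      linarith
  obtain ⟨q, hq⟩ := hab
  have hN : bV lam lam = 4 * (lam.1 2 * lam.1 3) + bE lam.2 lam.2 := by
    simp only [bV, bK, h1]
    ring
  rw [hN] at hnorm
  rw [hm] at hcs hpos'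
  generalize lam.1 2 = a at *
  generalize lam.1 3 = b at *
  have hqm : q + 1 ≤ m := by
    rw [hq] at hpos'
    exact_mod_cast hpos'
  have hqm' : a + b + 1 ≤ m := by
    rw [hq]
    exact_mod_cast hqm
  have hneg : ¬ 0 < a + b := by
    intro hp
    have : (1 : ℚ) ≤ a + b := by
      rw [hq] at hp ⊢
      exact_mod_cast hp
    nlinarith [sq_nonneg (a - b), mul_self_le_mul_self (by linarith : 0 ≤ a + b + 1) hqm']
  refine ⟨h1, ?_, ?_, fun h => h0 h.1 h.2⟩
  · by_contra hc
    have : b < 0 := by linarith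
    nlinarith
  · by_contra hc
    have : a < 0 := by linarith
    nlinarith

end Stmt16
end
end

section
/- Let x ∈ (1/2)ℤ⁴ be such that ⟨x,x⟩ is odd, where ⟨·,·⟩ is the form of K extended to ℚ⁴ (the norm of a half-integral vector is automatically an integer). Then there exists y ∈ (1/2)ℤ⁴ with y − x ∈ ℤ⁴ and ⟨y,y⟩ = −1; indeed y may be chosen among the six vectors (1/2,−1/2,0,0), (1/2,−1/2,1/2,0), (1/2,−1/2,0,1/2), (0,0,1/2,−1/2), (1/2,0,1/2,−1/2), (0,1/2,1/2,−1/2). (Every element of the discriminant group of U(2) ⊕ U(2) of odd norm is represented by a vector of norm −1.) -/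
/-!
STATEMENT 18: Every `x ∈ (1/2)ℤ⁴` of odd norm (for the form of
`K = U(2) ⊕ U(2)`) is congruent mod ℤ⁴ to a vector of norm −1, which may be
chosen among the six vectors (1/2,−1/2,0,0), (1/2,−1/2,1/2,0),
(1/2,−1/2,0,1/2), (0,0,1/2,−1/2), (1/2,0,1/2,−1/2), (0,1/2,1/2,−1/2).
-/

noncomputable section
namespace Stmt18

/-- The bilinear form of K = U(2) ⊕ U(2) on ℚ⁴:
`⟨x,y⟩ = 2(x₁y₂ + x₂y₁) + 2(x₃y₄ + x₄y₃)`. -/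
def bK (x y : Fin 4 → ℚ) : ℚ :=
  2 * (x 0 * y 1 + x 1 * y 0) + 2 * (x 2 * y 3 + x 3 * y 2)

/-- `x` lies in the lattice ℤ⁴ ⊂ ℚ⁴. -/
def isInt4 (x : Fin 4 → ℚ) : Prop := ∀ i, ∃ n : ℤ, x i = n

/-- `x` lies in the dual lattice (1/2)ℤ⁴ ⊂ ℚ⁴ of K. -/
def isHalf4 (x : Fin 4 → ℚ) : Prop := ∀ i, ∃ n : ℤ, x i = n / 2

/-- If `p ≡ a (mod 2)`, then `p/2 - a/2` is an integer. -/
theorem half_sub_int (q : ℚ) (p a : ℤ) (hq : q = p / 2) (h : p % 2 = a % 2) :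
    ∃ n : ℤ, q - (a : ℚ) / 2 = n := by
  obtain ⟨k, hk⟩ : ∃ k, p = a + 2 * k := ⟨(p - a) / 2, by omega⟩
  refine ⟨k, ?_⟩
  rw [hq, hk]
  push_cast
  ring

/-- A vector with half-integral entries `p i / 2` is congruent to `x`. -/
theorem isInt4_of (x : Fin 4 → ℚ) (a b c d : ℤ) (h0 : x 0 = a / 2) (h1 : x 1 = b / 2)
    (h2 : x 2 = c / 2) (h3 : x 3 = d / 2) (y : Fin 4 → ℚ) (p q r s : ℤ)
    (y0 : y 0 = p / 2) (y1 : y 1 = q / 2) (y2 : y 2 = r / 2) (y3 : y 3 = s / 2)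
    (e0 : p % 2 = a % 2) (e1 : q % 2 = b % 2) (e2 : r % 2 = c % 2) (e3 : s % 2 = d % 2) :
    isInt4 (y - x) := by
  intro i
  fin_cases i
  · simpa [h0] using half_sub_int _ p a y0 e0
  · simpa [h1] using half_sub_int _ q b y1 e1
  · simpa [h2] using half_sub_int _ r c y2 e2
  · simpa [h3] using half_sub_int _ s d y3 e3

theorem statement18 (x : Fin 4 → ℚ) (hx : isHalf4 x)
    (hodd : ∃ m : ℤ, bK x x = 2 * m + 1) :
    ∃ y : Fin 4 → ℚ,
      (y = ![1/2, -(1/2), 0, 0] ∨ y = ![1/2, -(1/2), 1/2, 0] ∨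
        y = ![1/2, -(1/2), 0, 1/2] ∨ y = ![0, 0, 1/2, -(1/2)] ∨
        y = ![1/2, 0, 1/2, -(1/2)] ∨ y = ![0, 1/2, 1/2, -(1/2)]) ∧
      isInt4 (y - x) ∧ bK y y = -1 := by
  obtain ⟨a, h0⟩ := hx 0
  obtain ⟨b, h1⟩ := hx 1
  obtain ⟨c, h2⟩ := hx 2
  obtain ⟨d, h3⟩ := hx 3
  obtain ⟨m, hm⟩ := hodd
  have hZ : a * b + c * d = 2 * m + 1 := by
    have : (a * b + c * d : ℚ) = 2 * m + 1 := by
      rw [← hm, bK, h0, h1, h2, h3]; ring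
    exact_mod_cast this
  have hmod : ((a % 2) * (b % 2) + (c % 2) * (d % 2)) % 2 = 1 := by
    have : (a * b + c * d) % 2 = 1 := by omega
    rw [Int.add_emod, Int.mul_emod a, Int.mul_emod c] at this
    rw [Int.add_emod]
    exact this
  have key := isInt4_of x a b c d h0 h1 h2 h3
  rcases Int.emod_two_eq_zero_or_one a with ha | ha <;>
  rcases Int.emod_two_eq_zero_or_one b with hb | hb <;>
  rcases Int.emod_two_eq_zero_or_one c with hc | hc <;>
  rcases Int.emod_two_eq_zero_or_one d with hd | hd <;>
  rw [ha, hb, hc, hd] at hmod <;> rw [ha, hb, hc, hd] at key <;>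
  first
  | (exfalso; revert hmod; decide)
  | exact ⟨_, Or.inl rfl, key _ 1 (-1) 0 0 (by simp) (by simp; ring) (by simp) (by simp)
      (by decide) (by decide) (by decide) (by decide), by simp [bK]; norm_num⟩
  | exact ⟨_, Or.inr (Or.inl rfl), key _ 1 (-1) 1 0 (by simp) (by simp; ring) (by simp) (by simp)
      (by decide) (by decide) (by decide) (by decide), by simp [bK]; norm_num⟩
  | exact ⟨_, Or.inr (Or.inr (Or.inl rfl)), key _ 1 (-1) 0 1 (by simp) (by simp; ring) (by simp)
      (by simp) (by decide) (by decide) (by decide) (by decide), by simp [bK]; norm_num⟩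
  | exact ⟨_, Or.inr (Or.inr (Or.inr (Or.inl rfl))), key _ 0 0 1 (-1) (by simp) (by simp)
      (by simp) (by simp; ring) (by decide) (by decide) (by decide) (by decide),
      by simp [bK]; norm_num⟩
  | exact ⟨_, Or.inr (Or.inr (Or.inr (Or.inr (Or.inl rfl)))), key _ 1 0 1 (-1) (by simp) (by simp)
      (by simp) (by simp; ring) (by decide) (by decide) (by decide) (by decide),
      by simp [bK]; norm_num⟩
  | exact ⟨_, Or.inr (Or.inr (Or.inr (Or.inr (Or.inr rfl)))), key _ 0 1 1 (-1) (by simp) (by simp)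
      (by simp) (by simp; ring) (by decide) (by decide) (by decide) (by decide),
      by simp [bK]; norm_num⟩

end Stmt18
end
end
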